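/- Every minimal brick has at least one vertex of degree three. -/

import Mathlib

open SimpleGraph

/-- A graph has a perfect matching. -/
def HasPerfectMatching {V : Type*} (G : SimpleGraph V) : Prop :=
  ∃ M : G.Subgraph, M.IsPerfectMatching

/-- `G` is 3-connected: at least 4 vertices, and deleting any at most 2
vertices leaves a connected graph. -/
def IsThreeConnected {V : Type*} [Fintype V] (G : SimpleGraph V) : Prop :=
  4 ≤ Fintype.card V ∧ ∀ S : Set V, S.ncard ≤ 2 → (G.induce Sᶜ).Connected

/-- A brick: a 3-connected graph such that deleting any two distinct vertices
leaves a graph with a perfect matching. -/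
def IsBrick {V : Type*} [Fintype V] (G : SimpleGraph V) : Prop :=
  IsThreeConnected G ∧
    ∀ u v : V, u ≠ v → HasPerfectMatching (G.induce ({u, v} : Set V)ᶜ)

/-- A minimal brick: a brick such that deleting any edge destroys brickness. -/
def IsMinimalBrick {V : Type*} [Fintype V] (G : SimpleGraph V) : Prop :=
  IsBrick G ∧ ∀ e ∈ G.edgeSet, ¬ IsBrick (G.deleteEdges {e})

open Finset

/-!
Suppose that all degrees are at least four. Deleting an edge `ab` of a minimal brick leaves a graph
that fails to be a brick, so `G - ab` has either a cut `T` with at most two vertices separating `a`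
from `b` or, by Tutte's theorem, a set `T` with exactly `#T` odd components, two of which contain
`a` and `b`. Moving one end of `ab` into `T` turns either obstruction into a fragment: a set `N`
together with a family `𝒜` of unions of components of `G - N` satisfying `#N ≤ #𝒜 + 2`. Take a
fragment covering as few vertices as possible. If some `b ∈ N` had two neighbours in it, uncrossing
the fragment with the obstruction at one of these two edges would produce a smaller fragment or
violate the brick inequality. Hence the edges from the fragment to `N` end in distinct vertices of
`N`, of which there are only `#𝒜 + 2`. This is too few: if `𝒜` has several members, then each of
them has at least four neighbours in `N` by minimality, and if it has only one, then minimality and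
the degrees force that member to send at least four edges to `N`.
-/

section Shores

variable {V : Type*} {G : SimpleGraph V} {S T X Y : Finset V} {𝒟 : Finset (Finset V)}

/-- `X` is a union of components of `G - S`: it misses `S`, and every edge leaving `X` ends in
`S`. -/
structure IsShore (G : SimpleGraph V) (S X : Finset V) : Prop where
  disjoint : Disjoint X S
  adj_mem : ∀ ⦃x⦄, x ∈ X → ∀ ⦃y⦄, G.Adj x y → y ∈ X ∨ y ∈ S

/-- `𝒟` consists of disjoint unions of components of `G - S`, each with an odd number of vertices.
Such families stand in for the odd components in Tutte's condition. -/
structure IsOddFamily (G : SimpleGraph V) (S : Finset V) (𝒟 : Finset (Finset V)) : Prop where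
  pairwiseDisjoint : (𝒟 : Set (Finset V)).PairwiseDisjoint id
  odd : ∀ D ∈ 𝒟, Odd #D
  isShore : ∀ D ∈ 𝒟, IsShore G S D

theorem IsShore.of_closed (hX : IsShore G S X) (hYX : Y ⊆ X)
    (hY : ∀ x ∈ Y, ∀ y ∈ X, G.Adj x y → y ∈ Y) : IsShore G S Y where
  disjoint := hX.disjoint.mono_left hYX
  adj_mem x hx y hxy := (hX.adj_mem (hYX hx) hxy).imp_left fun hy => hY x hx y hy hxy

theorem IsShore.mono_left (hX : IsShore G S X) (hST : S ⊆ T) (hdisj : Disjoint X T) :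
    IsShore G T X where
  disjoint := hdisj
  adj_mem _ hx _ hxy := (hX.adj_mem hx hxy).imp_right fun hy => hST hy

theorem IsOddFamily.subset {𝒟' : Finset (Finset V)} (h : IsOddFamily G S 𝒟) (hsub : 𝒟' ⊆ 𝒟) :
    IsOddFamily G S 𝒟' where
  pairwiseDisjoint := h.pairwiseDisjoint.subset (by exact_mod_cast hsub)
  odd D hD := h.odd D (hsub hD)
  isShore D hD := h.isShore D (hsub hD)

theorem induce_preconnected_iff {s : Set V} :
    (G.induce s).Preconnected ↔
      ∀ t ⊆ s, t.Nonempty → (∀ x ∈ t, ∀ y ∈ s, G.Adj x y → y ∈ t) → t = s := by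
  constructor
  · rintro h t hts ⟨x, hx⟩ ht
    refine hts.antisymm fun z hz => ?_
    obtain ⟨w⟩ := h ⟨x, hts hx⟩ ⟨z, hz⟩
    have walk_mem : ∀ {p q : s}, (G.induce s).Walk p q → p.1 ∈ t → q.1 ∈ t := by
      intro p q w
      induction w with
      | nil => exact id
      | cons hadj _ ih => exact fun hp => ih (ht _ hp _ (Subtype.prop _) hadj)
    exact walk_mem w hx
  · intro h x z
    have hreach := h {v | ∃ hv : v ∈ s, (G.induce s).Reachable x ⟨v, hv⟩} (fun v hv => hv.1)
      ⟨x, x.2, .refl x⟩ fun u ⟨hu, hxu⟩ v hv huv =>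
        ⟨hv, hxu.trans (Adj.reachable (G := G.induce s) (u := ⟨u, hu⟩) (v := ⟨v, hv⟩) huv)⟩
    exact (hreach.ge z.2).2

theorem induce_coe_preconnected_iff :
    (G.induce (X : Set V)).Preconnected ↔
      ∀ Y ⊆ X, Y.Nonempty → (∀ x ∈ Y, ∀ y ∈ X, G.Adj x y → y ∈ Y) → Y = X := by
  rw [induce_preconnected_iff]
  constructor
  · intro h Y hYX hY hcl
    exact_mod_cast h Y (by exact_mod_cast hYX) (by exact_mod_cast hY) (by exact_mod_cast hcl)
  · intro h t htX ht hcl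
    lift t to Finset V using X.finite_toSet.subset htX
    exact_mod_cast h t (by exact_mod_cast htX) (by exact_mod_cast ht) (by exact_mod_cast hcl)

theorem IsShore.exists_matching_adj {M : G.Subgraph} (hX : IsShore G S X) (hM : M.IsMatching)
    (hodd : Odd #X) (hXM : ↑X ⊆ M.verts) : ∃ x ∈ X, ∃ s ∈ S, M.Adj x s := by
  by_contra! hno
  have hMX : (M.induce X).IsMatching := by
    intro v hv
    obtain ⟨w, hvw, huniq⟩ := hM (hXM hv)
    have hw : w ∈ X := (hX.adj_mem hv hvw.adj_sub).resolve_right fun hw => hno v hv w hw hvw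
    exact ⟨w, ⟨hv, hw, hvw⟩, fun y hy => huniq y hy.2.2⟩
  have : Fintype (M.induce X).verts := inferInstanceAs (Fintype (X : Set V))
  have heven := hMX.even_card
  have : (M.induce X).verts.toFinset = X := by ext; simp
  rw [this] at heven
  exact Nat.not_even_iff_odd.2 hodd heven

theorem IsOddFamily.card_le_of_isMatching {M : G.Subgraph} (hM : M.IsMatching)
    (h𝒟 : IsOddFamily G S 𝒟) (hverts : ∀ D ∈ 𝒟, ↑D ⊆ M.verts) (hT : T ⊆ S)
    (hTM : ∀ t ∈ T, t ∉ M.verts) :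
    #𝒟 + #T ≤ #S := by
  classical
  have hexit : ∀ D ∈ 𝒟, ∃ s ∈ S \ T, ∃ x ∈ D, M.Adj x s := by
    intro D hD
    obtain ⟨x, hx, s, hs, hxs⟩ :=
      (h𝒟.isShore D hD).exists_matching_adj hM (h𝒟.odd D hD) (hverts D hD)
    exact ⟨s, mem_sdiff.2 ⟨hs, fun hsT => hTM s hsT hxs.snd_mem⟩, x, hx, hxs⟩
  have hcard := card_le_card_of_forall_subsingleton (fun D s => ∃ x ∈ D, M.Adj x s) hexit
    fun s _ D ⟨hD, x, hx, hxs⟩ E ⟨hE, y, hy, hys⟩ =>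
      h𝒟.pairwiseDisjoint.elim_finset hD hE x hx (hM.eq_of_adj_right hxs hys ▸ hy)
  have := card_sdiff_add_card_eq_card hT
  omega

theorem four_le_card_of_neighborSet_subset {v : V} {N : Finset V}
    (hdeg : ∀ v, 4 ≤ (G.neighborSet v).ncard) (hN : ∀ y, G.Adj v y → y ∈ N) : 4 ≤ #N := by
  rw [← Set.ncard_coe_finset]
  exact (hdeg v).trans (Set.ncard_le_ncard hN N.finite_toSet)

end Shores

section Bricks

variable {V : Type*} [Fintype V] {G : SimpleGraph V} {S X : Finset V}

theorem IsBrick.card_add_two_le {𝒟 : Finset (Finset V)} (hG : IsBrick G)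
    (h𝒟 : IsOddFamily G S 𝒟) (hS : 2 ≤ #S) : #𝒟 + 2 ≤ #S := by
  classical
  obtain ⟨u, hu, v, hv, huv⟩ := one_lt_card.1 hS
  obtain ⟨M, hM, hspan⟩ := hG.2 u v huv
  have hverts : ∀ w, w ∈ (M.map (Embedding.induce _).toHom).verts ↔ w ≠ u ∧ w ≠ v := by
    intro w
    simp [hspan.verts_eq_univ]
  rw [← card_pair huv]
  refine h𝒟.card_le_of_isMatching (hM.map (Embedding.induce _).toHom Subtype.val_injective)
    (fun D hD x hx => (hverts x).2 ⟨?_, ?_⟩) (by simp [insert_subset_iff, hu, hv]) (by simp)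
  all_goals rintro rfl; exact Finset.disjoint_left.1 (h𝒟.isShore D hD).disjoint hx ‹_›

theorem IsThreeConnected.three_le_card (hG : IsThreeConnected G) (hX : IsShore G S X)
    (hne : X.Nonempty) {z : V} (hzX : z ∉ X) (hzS : z ∉ S) : 3 ≤ #S := by
  by_contra hlt
  have hconn := hG.2 S (by rw [Set.ncard_coe_finset]; omega)
  have hXS : (X : Set V) = (S : Set V)ᶜ := induce_preconnected_iff.1 hconn.preconnected X
    (fun x hx => Finset.disjoint_left.1 hX.disjoint hx) hne
    fun x hx y hyS hxy => (hX.adj_mem hx hxy).resolve_right hyS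
  exact hzX (hXS.ge hzS)

theorem IsBrick.even_card (hG : IsBrick G) : Even (Fintype.card V) := by
  classical
  obtain ⟨u, v, huv⟩ := Fintype.one_lt_card_iff.1 (by have := hG.1.1; omega : 1 < Fintype.card V)
  obtain ⟨M, hM⟩ := hG.2 u v huv
  have heven := hM.even_card
  have hcard := Fintype.card_compl_set ({u, v} : Set V)
  have hpair : Fintype.card ({u, v} : Set V) = 2 := by
    rw [Set.card_insert _ (by simpa using huv), Set.card_singleton]
  have := hG.1.1
  rw [Nat.even_iff] at heven ⊢
  omega

theorem IsThreeConnected.three_le_ncard_neighborSet (hG : IsThreeConnected G) (v : V) :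
    3 ≤ (G.neighborSet v).ncard := by
  classical
  rw [Set.ncard_eq_toFinset_card']
  by_cases hfull : ∃ z, z ≠ v ∧ z ∉ G.neighborFinset v
  · obtain ⟨z, hzv, hz⟩ := hfull
    refine hG.three_le_card (X := {v}) ⟨by simp, fun x hx y hxy => ?_⟩ (by simp) (by simpa) hz
    rw [mem_singleton.1 hx] at hxy
    simp [hxy]
  · push Not at hfull
    have huniv : univ ⊆ insert v (G.neighborFinset v) := fun z _ =>
      mem_insert.2 (or_iff_not_imp_left.2 (hfull z))
    have := (card_le_card huniv).trans (card_insert_le _ _)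
    rw [card_univ] at this
    have := hG.1
    change 3 ≤ #(G.neighborFinset v)
    omega

end Bricks

section Tutte

variable {V : Type*} [Finite V] {G : SimpleGraph V} {T : Finset V}

theorem exists_isOddFamily_of_embedding {W : Type*} {K : SimpleGraph W} (φ : K ↪g G)
    (hφ : ∀ v, v ∈ Set.range φ ↔ v ∉ T) :
    ∃ 𝒟, IsOddFamily G T 𝒟 ∧ #𝒟 = K.oddComponents.ncard := by
  classical
  cases nonempty_fintype V
  have : Finite W := Finite.of_injective φ φ.injective
  have : Fintype K.oddComponents := Fintype.ofFinite _
  let image (c : K.ConnectedComponent) : Finset V := (φ '' c.supp).toFinset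
  have mem_image {c v} : v ∈ image c ↔ ∃ w ∈ c.supp, φ w = v := by simp [image]
  have image_disjoint {c d} (hcd : c ≠ d) : Disjoint (image c) (image d) := by
    rw [Finset.disjoint_left]
    intro v hc hd
    obtain ⟨w, hw, rfl⟩ := mem_image.1 hc
    obtain ⟨w', hw', hww'⟩ := mem_image.1 hd
    rw [φ.injective hww'] at hw'
    exact hcd (hw.symm.trans hw')
  have image_nonempty c : (image c).Nonempty := by simpa [image] using c.nonempty_supp
  have image_injective : image.Injective := fun c d hcd => by
    by_contra hne
    have hdisj := image_disjoint hne
    rw [hcd, disjoint_self_iff_empty] at hdisj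
    exact (image_nonempty d).ne_empty hdisj
  refine ⟨K.oddComponents.toFinset.image image, ⟨?_, ?_, ?_⟩, ?_⟩
  · simp only [Set.PairwiseDisjoint, Set.Pairwise, coe_image, Set.mem_image]
    rintro _ ⟨c, -, rfl⟩ _ ⟨d, -, rfl⟩ hcd
    exact image_disjoint fun h => hcd (h ▸ rfl)
  · simp only [Finset.mem_image, Set.mem_toFinset, forall_exists_index, and_imp]
    rintro _ c hc rfl
    rwa [← Set.ncard_eq_toFinset_card', Set.ncard_image_of_injective _ φ.injective]
  · simp only [Finset.mem_image, forall_exists_index, and_imp]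
    rintro _ c - rfl
    refine ⟨Finset.disjoint_left.2 fun v hv => ?_,
      fun x hx y hxy => or_iff_not_imp_right.2 fun hy => ?_⟩
    · obtain ⟨w, -, rfl⟩ := mem_image.1 hv
      exact (hφ _).1 ⟨w, rfl⟩
    · obtain ⟨w, hw, rfl⟩ := mem_image.1 hx
      obtain ⟨w', rfl⟩ := (hφ _).2 hy
      exact mem_image.2 ⟨w', c.mem_supp_of_adj_mem_supp hw (φ.map_adj_iff.1 hxy), rfl⟩
  · rw [card_image_of_injective _ image_injective, Set.ncard_eq_toFinset_card']

theorem exists_isOddFamily_of_not_hasPerfectMatching {u v : V} (huv : u ≠ v)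
    (hno : ¬ HasPerfectMatching (G.induce ({u, v} : Set V)ᶜ)) :
    ∃ T 𝒟, IsOddFamily G T 𝒟 ∧ 2 ≤ #T ∧ #T ≤ #𝒟 + 1 := by
  classical
  cases nonempty_fintype V
  rw [HasPerfectMatching, SimpleGraph.tutte] at hno
  push Not at hno
  obtain ⟨U, hU⟩ := hno
  let H := (⊤ : (G.induce ({u, v} : Set V)ᶜ).Subgraph).deleteVerts U
  let φ : H.coe ↪g G :=
    { toFun := fun w => w.1.1
      inj' := Subtype.val_injective.comp Subtype.val_injective
      map_rel_iff' := by
        rintro ⟨x, hx⟩ ⟨y, hy⟩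
        have hxU : x ∉ U := by simpa [H] using hx
        have hyU : y ∉ U := by simpa [H] using hy
        simp [H, hxU, hyU] }
  let T : Finset V := (({u, v} : Set V) ∪ Subtype.val '' U).toFinset
  have hT : #T = 2 + U.ncard := by
    rw [← Set.ncard_eq_toFinset_card', Set.ncard_union_eq, Set.ncard_pair huv,
      Set.ncard_image_of_injective _ Subtype.val_injective]
    exact Set.disjoint_right.2 fun _ ⟨w, _, hw⟩ => hw ▸ w.2
  obtain ⟨𝒟, h𝒟, hcard⟩ := exists_isOddFamily_of_embedding (T := T) φ <| by
    intro w
    simp only [Set.mem_range, T, Set.mem_toFinset, Set.mem_union, not_or]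
    constructor
    · rintro ⟨x, rfl⟩
      refine ⟨x.1.2, fun ⟨z, hz, hzx⟩ => ?_⟩
      have hx : x.1 ∉ U := by simpa [H] using x.2
      exact hx (Subtype.ext hzx ▸ hz)
    · rintro ⟨hw, hwU⟩
      exact ⟨⟨⟨w, hw⟩, by simpa [H] using fun h => hwU ⟨_, h, rfl⟩⟩, rfl⟩
  refine ⟨T, 𝒟, h𝒟, by omega, ?_⟩
  have : U.ncard < H.coe.oddComponents.ncard := hU
  omega

end Tutte

section DisjointFamilies

variable {V : Type*} [DecidableEq V] {G : SimpleGraph V} {S T X Y D : Finset V}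
  {𝒟 : Finset (Finset V)}

theorem IsOddFamily.insert_of_disjoint (h : IsOddFamily G S 𝒟) (hX : IsShore G S X) (hodd : Odd #X)
    (hdisj : ∀ D ∈ 𝒟, Disjoint X D) : IsOddFamily G S (insert X 𝒟) where
  pairwiseDisjoint := by
    rw [coe_insert]
    exact h.pairwiseDisjoint.insert fun D hD _ => hdisj D hD
  odd := forall_mem_insert _ _ _ |>.2 ⟨hodd, h.odd⟩
  isShore := forall_mem_insert _ _ _ |>.2 ⟨hX, h.isShore⟩

theorem card_insert_of_odd_of_disjoint (hodd : Odd #X) (hdisj : ∀ D ∈ 𝒟, Disjoint X D) :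
    #(insert X 𝒟) = #𝒟 + 1 :=
  card_insert_of_notMem fun hX =>
    (card_pos.1 hodd.pos).ne_empty (Finset.disjoint_self_iff_empty X |>.1 (hdisj X hX))

theorem IsOddFamily.disjoint_of_mem_erase (h : IsOddFamily G S 𝒟) (hD : D ∈ 𝒟) (hYD : Y ⊆ D) :
    ∀ E ∈ 𝒟.erase D, Disjoint Y E := fun _ hE =>
  (h.pairwiseDisjoint hD (mem_of_mem_erase hE) (ne_of_mem_erase hE).symm).mono_left hYD

theorem IsOddFamily.insert_erase (h : IsOddFamily G S 𝒟) (hD : D ∈ 𝒟) (hYD : Y ⊆ D)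
    (hodd : Odd #Y) (hY : ∀ x ∈ Y, ∀ y ∈ D, G.Adj x y → y ∈ Y) :
    IsOddFamily G S (insert Y (𝒟.erase D)) :=
  (h.subset (erase_subset D 𝒟)).insert_of_disjoint ((h.isShore D hD).of_closed hYD hY) hodd
    (h.disjoint_of_mem_erase hD hYD)

theorem IsOddFamily.card_insert_erase (h : IsOddFamily G S 𝒟) (hD : D ∈ 𝒟) (hYD : Y ⊆ D)
    (hodd : Odd #Y) : #(insert Y (𝒟.erase D)) = #𝒟 := by
  rw [card_insert_of_odd_of_disjoint hodd (h.disjoint_of_mem_erase hD hYD),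
    card_erase_add_one hD]

theorem closed_sdiff (hY : ∀ x ∈ Y, ∀ y ∈ D, G.Adj x y → y ∈ Y) :
    ∀ x ∈ D \ Y, ∀ y ∈ D, G.Adj x y → y ∈ D \ Y := fun x hx y hy hxy =>
  mem_sdiff.2 ⟨hy, fun hyY => (mem_sdiff.1 hx).2 (hY y hyY x (mem_sdiff.1 hx).1 hxy.symm)⟩

theorem sum_card_inter (h𝒟 : (𝒟 : Set (Finset V)).PairwiseDisjoint id) (Y : Finset V) :
    ∑ D ∈ 𝒟, #(D ∩ Y) = #(𝒟.biUnion id ∩ Y) := by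
  rw [biUnion_inter, card_biUnion]
  · rfl
  · exact fun D hD E hE hDE => (h𝒟 hD hE hDE).mono inter_subset_left inter_subset_left

theorem sum_card_inter_add_card_inter (h𝒟 : (𝒟 : Set (Finset V)).PairwiseDisjoint id)
    (hT : ∀ D ∈ 𝒟, Disjoint D T) (hcover : ∀ v ∉ T, ∃ D ∈ 𝒟, v ∈ D) (Y : Finset V) :
    ∑ D ∈ 𝒟, #(Y ∩ D) + #(Y ∩ T) = #Y := by
  have hinter : 𝒟.biUnion id ∩ Y = Y \ T := by
    ext v
    simp only [mem_biUnion, id, mem_inter, mem_sdiff]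
    exact ⟨fun ⟨⟨D, hD, hv⟩, hvY⟩ => ⟨hvY, Finset.disjoint_left.1 (hT D hD) hv⟩,
      fun ⟨hvY, hvT⟩ => ⟨hcover v hvT, hvY⟩⟩
  simp only [inter_comm Y]
  rw [sum_card_inter h𝒟, hinter, inter_comm T, card_sdiff_add_card_inter]

end DisjointFamilies

section NearBarriers

variable {V : Type*} {G : SimpleGraph V} {T X D : Finset V} {𝒟 : Finset (Finset V)}

theorem exists_odd_closed_of_not_preconnected (hodd : Odd #D)
    (hD : ¬ (G.induce (D : Set V)).Preconnected) :
    ∃ Y ⊂ D, Odd #Y ∧ ∀ x ∈ Y, ∀ y ∈ D, G.Adj x y → y ∈ Y := by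
  classical
  rw [induce_coe_preconnected_iff] at hD
  push Not at hD
  obtain ⟨Y, hYD, hne, hY, hneq⟩ := hD
  by_cases hYodd : Odd #Y
  · exact ⟨Y, hYD.ssubset_of_ne hneq, hYodd, hY⟩
  · refine ⟨D \ Y, sdiff_ssubset hYD hne, ?_, closed_sdiff hY⟩
    rw [card_sdiff_of_subset hYD]
    exact Nat.Odd.sub_even (card_le_card hYD) hodd (Nat.not_odd_iff_even.1 hYodd)

/-- A violation, up to one unit of slack, of the bound `#𝒟 + 2 ≤ #T` that holds in a brick. -/
structure IsNearBarrier (G : SimpleGraph V) (T : Finset V) (𝒟 : Finset (Finset V)) : Prop where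
  isOddFamily : IsOddFamily G T 𝒟
  two_le_card : 2 ≤ #T
  card_le : #T ≤ #𝒟 + 1

/-- If `X` is even, moving one of its vertices into `T` leaves an odd set. -/
theorem IsNearBarrier.exists_larger (h : IsNearBarrier G T 𝒟) (hX : IsShore G T X)
    (hne : X.Nonempty) (hdisj : ∀ D ∈ 𝒟, Disjoint X D) :
    ∃ T' 𝒟', IsNearBarrier G T' 𝒟' ∧ #T + #𝒟 < #T' + #𝒟' := by
  classical
  have hT := h.two_le_card
  have h𝒟 := h.card_le
  by_cases hodd : Odd #X
  · have hcard := card_insert_of_odd_of_disjoint hodd hdisj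
    exact ⟨T, _, ⟨h.isOddFamily.insert_of_disjoint hX hodd hdisj, hT, by omega⟩, by omega⟩
  · obtain ⟨v, hv⟩ := hne
    have hvT : v ∉ T := Finset.disjoint_left.1 hX.disjoint hv
    have hfamily : IsOddFamily G (insert v T) 𝒟 :=
      { h.isOddFamily with
        isShore := fun D hD => (h.isOddFamily.isShore D hD).mono_left (subset_insert v T) <|
          disjoint_insert_right.2
            ⟨Finset.disjoint_left.1 (hdisj D hD) hv, (h.isOddFamily.isShore D hD).disjoint⟩ }
    have herase : IsShore G (insert v T) (X.erase v) :=
      { disjoint := disjoint_insert_right.2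
          ⟨notMem_erase v X, hX.disjoint.mono_left (erase_subset v X)⟩
        adj_mem := fun x hx y hxy => by
          have := hX.adj_mem (mem_of_mem_erase hx) hxy
          simp only [mem_erase, mem_insert]
          tauto }
    have hodd' : Odd #(X.erase v) := by
      rw [card_erase_of_mem hv]
      exact Nat.Even.sub_odd (card_pos.2 ⟨v, hv⟩) (Nat.not_odd_iff_even.1 hodd) odd_one
    have hdisj' : ∀ D ∈ 𝒟, Disjoint (X.erase v) D := fun D hD =>
      (hdisj D hD).mono_left (erase_subset v X)
    have hcard := card_insert_of_odd_of_disjoint hodd' hdisj'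
    have hcardT := card_insert_of_notMem hvT
    exact ⟨_, _, ⟨hfamily.insert_of_disjoint herase hodd' hdisj', by omega, by omega⟩, by omega⟩

/-- A near barrier with `#T + #𝒟` as large as possible, so that its members are the components of
`G - T`. -/
structure IsMaxNearBarrier (G : SimpleGraph V) (T : Finset V) (𝒟 : Finset (Finset V)) : Prop
    extends IsNearBarrier G T 𝒟 where
  le_of_isNearBarrier : ∀ T' 𝒟', IsNearBarrier G T' 𝒟' → #T' + #𝒟' ≤ #T + #𝒟

theorem IsNearBarrier.exists_isMaxNearBarrier [Finite V] (h : IsNearBarrier G T 𝒟) :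
    ∃ T 𝒟, IsMaxNearBarrier G T 𝒟 := by
  classical
  cases nonempty_fintype V
  obtain ⟨⟨T, 𝒟⟩, hmem, hmax⟩ := exists_max_image
    (univ.filter fun p : Finset V × Finset (Finset V) => IsNearBarrier G p.1 p.2)
    (fun p => #p.1 + #p.2) ⟨(T, 𝒟), by simpa using h⟩
  exact ⟨T, 𝒟, (mem_filter.1 hmem).2, fun T' 𝒟' h' => hmax (T', 𝒟') (by simpa using h')⟩

theorem IsMaxNearBarrier.exists_mem_not_disjoint (h : IsMaxNearBarrier G T 𝒟)
    {ℰ : Finset (Finset V)} (hℰ : IsOddFamily G T ℰ) (hcard : #ℰ = #𝒟) (hX : IsShore G T X)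
    (hne : X.Nonempty) :
    ∃ D ∈ ℰ, ¬ Disjoint X D := by
  by_contra! hdisj
  obtain ⟨T', 𝒟', h', hlt⟩ :=
    IsNearBarrier.exists_larger ⟨hℰ, h.two_le_card, hcard ▸ h.card_le⟩ hX hne hdisj
  have := h.le_of_isNearBarrier T' 𝒟' h'
  omega

theorem IsMaxNearBarrier.exists_mem [Finite V] (h : IsMaxNearBarrier G T 𝒟) {v : V} (hv : v ∉ T) :
    ∃ D ∈ 𝒟, v ∈ D := by
  classical
  cases nonempty_fintype V
  by_contra! hvD
  have hrest : IsShore G T (univ \ (T ∪ 𝒟.biUnion id)) :=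
    { disjoint := (sdiff_disjoint).mono_right subset_union_left
      adj_mem := fun x hx y hxy => or_iff_not_imp_right.2 fun hy => by
        simp only [mem_sdiff, mem_univ, mem_union, mem_biUnion, id, true_and] at hx ⊢
        rintro (hyT | ⟨D, hD, hyD⟩)
        · exact hy hyT
        · exact hx <| ((h.isOddFamily.isShore D hD).adj_mem hyD hxy.symm).elim
            (fun hxD => .inr ⟨D, hD, hxD⟩) .inl }
  obtain ⟨D, hD, hmeet⟩ :=
    h.exists_mem_not_disjoint h.isOddFamily rfl hrest ⟨v, by simpa [hv] using hvD⟩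
  exact hmeet (sdiff_disjoint.mono_right
    ((subset_biUnion_of_mem id hD).trans subset_union_right))

theorem IsMaxNearBarrier.preconnected (h : IsMaxNearBarrier G T 𝒟) (hD : D ∈ 𝒟) :
    (G.induce (D : Set V)).Preconnected := by
  classical
  by_contra hnot
  obtain ⟨Y, hYD, hodd, hY⟩ := exists_odd_closed_of_not_preconnected (h.isOddFamily.odd D hD) hnot
  obtain ⟨E, hE, hmeet⟩ := h.exists_mem_not_disjoint
    (h.isOddFamily.insert_erase hD hYD.subset hodd hY)
    (h.isOddFamily.card_insert_erase hD hYD.subset hodd)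
    ((h.isOddFamily.isShore D hD).of_closed sdiff_subset (closed_sdiff hY))
    (sdiff_nonempty.2 hYD.not_subset)
  rcases mem_insert.1 hE with rfl | hE
  · exact hmeet sdiff_disjoint
  · exact hmeet (h.isOddFamily.disjoint_of_mem_erase hD sdiff_subset E hE)

theorem IsOddFamily.even_card_add_card [Fintype V] (h : IsOddFamily G T 𝒟)
    (hcover : ∀ v ∉ T, ∃ D ∈ 𝒟, v ∈ D) (heven : Even (Fintype.card V)) : Even (#T + #𝒟) := by
  classical
  have hsum := sum_card_inter_add_card_inter h.pairwiseDisjoint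
    (fun D hD => (h.isShore D hD).disjoint) hcover univ
  simp only [univ_inter, card_univ] at hsum
  have hparity : Odd (∑ D ∈ 𝒟, #D) ↔ Odd #𝒟 := by
    rw [odd_sum_iff_odd_card_odd, filter_true_of_mem h.odd]
  rw [← hsum] at heven
  grind

end NearBarriers

section EdgeSeparations

variable {V : Type*} {G : SimpleGraph V} {a b : V} {T X D E₁ E₂ : Finset V}
  {𝒟 : Finset (Finset V)}

theorem IsShore.adj_mem_of_deleteEdges (hX : IsShore (G.deleteEdges {s(a, b)}) T X) {x y : V}
    (hx : x ∈ X) (hxy : G.Adj x y) :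
    y ∈ X ∨ y ∈ T ∨ x = a ∧ y = b ∨ x = b ∧ y = a := by
  by_cases he : s(x, y) = s(a, b)
  · exact .inr (.inr (by simpa using he))
  · exact (hX.adj_mem hx (deleteEdges_adj.2 ⟨hxy, by simpa using he⟩)).imp_right .inl

theorem IsShore.of_deleteEdges (hX : IsShore (G.deleteEdges {s(a, b)}) T X)
    (ha : a ∈ X → b ∈ X ∨ b ∈ T) (hb : b ∈ X → a ∈ X ∨ a ∈ T) : IsShore G T X where
  disjoint := hX.disjoint
  adj_mem x hx y hxy := by
    rcases hX.adj_mem_of_deleteEdges hx hxy with h | h | ⟨rfl, rfl⟩ | ⟨rfl, rfl⟩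
    · exact .inl h
    · exact .inr h
    · exact ha hx
    · exact hb hx

/-- The sets in `𝒟` partition `V \ T`, and the only edge between different ones is `ab`, which joins
`E₁` to `E₂`. -/
structure IsEdgeSeparation (G : SimpleGraph V) (a b : V) (T : Finset V) (𝒟 : Finset (Finset V))
    (E₁ E₂ : Finset V) : Prop where
  pairwiseDisjoint : (𝒟 : Set (Finset V)).PairwiseDisjoint id
  isShore : ∀ D ∈ 𝒟, IsShore (G.deleteEdges {s(a, b)}) T D
  exists_mem : ∀ v ∉ T, ∃ D ∈ 𝒟, v ∈ D
  fst_mem : E₁ ∈ 𝒟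
  snd_mem : E₂ ∈ 𝒟
  fst_ne_snd : E₁ ≠ E₂
  mem_fst : a ∈ E₁
  mem_snd : b ∈ E₂

/-- A failure of Tutte's condition for `G - ab` minus two vertices: the components of `G - ab - T`
are the sets in `𝒟`, which are all odd, and there are exactly `#T` of them. -/
structure IsEdgeBarrier (G : SimpleGraph V) (a b : V) (T : Finset V) (𝒟 : Finset (Finset V))
    (E₁ E₂ : Finset V) : Prop extends IsEdgeSeparation G a b T 𝒟 E₁ E₂ where
  odd : ∀ D ∈ 𝒟, Odd #D
  preconnected : ∀ D ∈ 𝒟, (G.induce (D : Set V)).Preconnected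
  card_eq : #T = #𝒟

namespace IsEdgeSeparation

theorem disjoint_fst_snd (h : IsEdgeSeparation G a b T 𝒟 E₁ E₂) : Disjoint E₁ E₂ :=
  h.pairwiseDisjoint h.fst_mem h.snd_mem h.fst_ne_snd

theorem eq_fst (h : IsEdgeSeparation G a b T 𝒟 E₁ E₂) (hD : D ∈ 𝒟) (ha : a ∈ D) : D = E₁ :=
  h.pairwiseDisjoint.elim_finset hD h.fst_mem a ha h.mem_fst

theorem eq_snd (h : IsEdgeSeparation G a b T 𝒟 E₁ E₂) (hD : D ∈ 𝒟) (hb : b ∈ D) : D = E₂ :=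
  h.pairwiseDisjoint.elim_finset hD h.snd_mem b hb h.mem_snd

theorem symm (h : IsEdgeSeparation G a b T 𝒟 E₁ E₂) : IsEdgeSeparation G b a T 𝒟 E₂ E₁ where
  pairwiseDisjoint := h.pairwiseDisjoint
  isShore := Sym2.eq_swap (a := a) ▸ h.isShore
  exists_mem := h.exists_mem
  fst_mem := h.snd_mem
  snd_mem := h.fst_mem
  fst_ne_snd := h.fst_ne_snd.symm
  mem_fst := h.mem_snd
  mem_snd := h.mem_fst

theorem isShore_of_ne (h : IsEdgeSeparation G a b T 𝒟 E₁ E₂) (hD : D ∈ 𝒟) (h₁ : D ≠ E₁)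
    (h₂ : D ≠ E₂) : IsShore G T D :=
  (h.isShore D hD).of_deleteEdges (fun ha => absurd (h.eq_fst hD ha) h₁)
    fun hb => absurd (h.eq_snd hD hb) h₂

theorem isShore_fst [DecidableEq V] (h : IsEdgeSeparation G a b T 𝒟 E₁ E₂) :
    IsShore G (insert b T) E₁ where
  disjoint := disjoint_insert_right.2
    ⟨Finset.disjoint_right.1 h.disjoint_fst_snd h.mem_snd, (h.isShore E₁ h.fst_mem).disjoint⟩
  adj_mem x hx y hxy := by
    have hb : b ∉ E₁ := Finset.disjoint_right.1 h.disjoint_fst_snd h.mem_snd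
    rcases (h.isShore E₁ h.fst_mem).adj_mem_of_deleteEdges hx hxy with
      hy | hy | ⟨rfl, rfl⟩ | ⟨rfl, rfl⟩
    · exact .inl hy
    · exact .inr (mem_insert_of_mem hy)
    · exact .inr (mem_insert_self y T)
    · exact absurd hx hb

theorem isShore_insert_of_ne [DecidableEq V] (h : IsEdgeSeparation G a b T 𝒟 E₁ E₂)
    (hD : D ∈ 𝒟) (hne : D ≠ E₁) : IsShore G (insert a T) D := by
  rcases eq_or_ne D E₂ with rfl | hne₂
  · exact h.symm.isShore_fst
  · have hDT := h.isShore_of_ne hD hne hne₂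
    exact hDT.mono_left (subset_insert a T) <|
      disjoint_insert_right.2 ⟨fun ha => hne (h.eq_fst hD ha), hDT.disjoint⟩

theorem exists_ne_snd (h : IsEdgeSeparation G a b T 𝒟 E₁ E₂)
    (hdeg : ∀ v, 4 ≤ (G.neighborSet v).ncard) (hT : #T ≤ 2) : ∃ z ∈ E₂, z ≠ b := by
  classical
  by_contra! hall
  have hnbr := four_le_card_of_neighborSet_subset hdeg (v := b) (N := insert a T) fun y hby =>
    (h.symm.isShore_fst.adj_mem h.mem_snd hby).resolve_left fun hy => hby.ne' (hall y hy)
  have := card_insert_le a T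
  omega

end IsEdgeSeparation

theorem isEdgeSeparation_pair [DecidableEq V] {P Q : Finset V}
    (hP : IsShore (G.deleteEdges {s(a, b)}) T P) (hQ : IsShore (G.deleteEdges {s(a, b)}) T Q)
    (hPQ : Disjoint P Q) (hcover : ∀ v ∉ T, v ∈ P ∨ v ∈ Q) (ha : a ∈ P) (hb : b ∈ Q) :
    IsEdgeSeparation G a b T {P, Q} P Q where
  pairwiseDisjoint := by
    rw [coe_pair]
    exact Set.PairwiseDisjoint.insert (Set.pairwiseDisjoint_singleton _ _)
      fun D hD _ => Set.mem_singleton_iff.1 hD ▸ hPQ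
  isShore := by simp [hP, hQ]
  exists_mem v hv := by simpa using hcover v hv
  fst_mem := mem_insert_self _ _
  snd_mem := mem_insert_of_mem (mem_singleton_self _)
  fst_ne_snd h := Finset.disjoint_left.1 hPQ ha (h ▸ ha)
  mem_fst := ha
  mem_snd := hb

theorem IsThreeConnected.exists_isEdgeSeparation [Fintype V] [DecidableEq V]
    (hG : IsThreeConnected G) (hnot : ¬ IsThreeConnected (G.deleteEdges {s(a, b)})) :
    ∃ T P Q, #T ≤ 2 ∧ IsEdgeSeparation G a b T {P, Q} P Q := by
  classical
  simp only [IsThreeConnected, hG.1, true_and, not_forall] at hnot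
  obtain ⟨S, hS, hdisc⟩ := hnot
  lift S to Finset V using S.toFinite
  rw [Set.ncard_coe_finset] at hS
  obtain ⟨w, hw⟩ : ∃ w, w ∉ S := by
    by_contra! hfull
    have := (card_le_card fun v _ => hfull v : #univ ≤ #S)
    have := hG.1
    rw [card_univ] at *
    omega
  rw [← coe_compl] at hdisc
  have hpre : ¬ ((G.deleteEdges {s(a, b)}).induce (Sᶜ : Finset V)).Preconnected := fun h =>
    hdisc { preconnected := h, nonempty := ⟨w, by simpa using hw⟩ }
  rw [induce_coe_preconnected_iff] at hpre
  push Not at hpre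
  obtain ⟨P, hPS, hPne, hPcl, hP⟩ := hpre
  have hcompl : IsShore (G.deleteEdges {s(a, b)}) S Sᶜ :=
    ⟨disjoint_compl_left, fun x _ y _ => (em (y ∈ S)).symm.imp_left mem_compl.2⟩
  have hPshore := hcompl.of_closed hPS hPcl
  have hQshore := hcompl.of_closed sdiff_subset (closed_sdiff hPcl)
  have hcover : ∀ v ∉ S, v ∈ P ∨ v ∈ Sᶜ \ P := fun v hv => by simp [hv, em]
  obtain ⟨z, hz⟩ := sdiff_nonempty.2 fun h => hP (hPS.antisymm h)
  have hcross : (a ∈ P ∧ b ∈ Sᶜ \ P) ∨ (b ∈ P ∧ a ∈ Sᶜ \ P) := by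
    by_contra! hnone
    have := hG.three_le_card (hPshore.of_deleteEdges
      (fun ha => or_iff_not_imp_right.2 fun hb => (hcover b hb).resolve_right (hnone.1 ha))
      fun hb => or_iff_not_imp_right.2 fun ha => (hcover a ha).resolve_right (hnone.2 hb))
      hPne (mem_sdiff.1 hz).2 (mem_compl.1 (mem_sdiff.1 hz).1)
    omega
  rcases hcross with ⟨ha, hb⟩ | ⟨hb, ha⟩
  · exact ⟨S, _, _, hS, isEdgeSeparation_pair hPshore hQshore disjoint_sdiff hcover ha hb⟩
  · exact ⟨S, _, _, hS, isEdgeSeparation_pair hQshore hPshore sdiff_disjoint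
      (fun v hv => (hcover v hv).symm) ha hb⟩

theorem IsBrick.exists_isEdgeBarrier [Fintype V] (hG : IsBrick G) {u v : V} (huv : u ≠ v)
    (hno : ¬ HasPerfectMatching ((G.deleteEdges {s(a, b)}).induce ({u, v} : Set V)ᶜ)) :
    ∃ T 𝒟 E₁ E₂, IsEdgeBarrier G a b T 𝒟 E₁ E₂ := by
  classical
  obtain ⟨T₀, 𝒟₀, hodd₀, hT₀, hcard₀⟩ := exists_isOddFamily_of_not_hasPerfectMatching huv hno
  obtain ⟨T, 𝒟, h⟩ := IsNearBarrier.exists_isMaxNearBarrier ⟨hodd₀, hT₀, hcard₀⟩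
  have heven := h.isOddFamily.even_card_add_card (fun _ => h.exists_mem) hG.even_card
  have hle := h.card_le
  have hT𝒟 : #T ≤ #𝒟 := by grind
  have hsep : ∃ E₁ ∈ 𝒟, ∃ E₂ ∈ 𝒟, E₁ ≠ E₂ ∧ a ∈ E₁ ∧ b ∈ E₂ := by
    by_contra! hsame
    have hfamily : IsOddFamily G T 𝒟 :=
      { h.isOddFamily with
        isShore := fun D hD => (h.isOddFamily.isShore D hD).of_deleteEdges
          (fun ha => or_iff_not_imp_right.2 fun hbT => by
            obtain ⟨E, hE, hbE⟩ := h.exists_mem hbT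
            by_contra hbD
            exact hsame D hD E hE (fun hDE => hbD (hDE ▸ hbE)) ha hbE)
          (fun hb => or_iff_not_imp_right.2 fun haT => by
            obtain ⟨E, hE, haE⟩ := h.exists_mem haT
            by_contra haD
            exact hsame E hE D hD (fun hED => haD (hED ▸ haE)) haE hb) }
    have := hG.card_add_two_le hfamily h.two_le_card
    omega
  obtain ⟨E₁, hE₁, E₂, hE₂, hne, ha, hb⟩ := hsep
  have hsep : IsEdgeSeparation G a b T 𝒟 E₁ E₂ :=
    ⟨h.isOddFamily.pairwiseDisjoint, h.isOddFamily.isShore, fun _ => h.exists_mem, hE₁, hE₂, hne,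
      ha, hb⟩
  have hrest : IsOddFamily G T ((𝒟.erase E₁).erase E₂) :=
    { h.isOddFamily.subset ((erase_subset _ _).trans (erase_subset _ _)) with
      isShore := fun D hD => by
        simp only [mem_erase] at hD
        exact hsep.isShore_of_ne hD.2.2 hD.2.1 hD.1 }
  have hrest_card := hG.card_add_two_le hrest h.two_le_card
  rw [card_erase_of_mem (mem_erase.2 ⟨hne.symm, hE₂⟩), card_erase_of_mem hE₁] at hrest_card
  exact ⟨T, 𝒟, E₁, E₂, hsep, h.isOddFamily.odd, fun D hD =>
    (h.preconnected hD).mono (comap_monotone _ (deleteEdges_le _)), by omega⟩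

end EdgeSeparations

section Fragments

variable {V : Type*} {G : SimpleGraph V} {N S X Y : Finset V} {𝒜 𝒟 : Finset (Finset V)}

/-- A set `N` together with unions of components `𝒜` of `G - N` that come within one unit of
violating the brick inequality `#𝒜 + 2 ≤ #N` for odd families, or, if `𝒜` is a single set, the
connectivity bound `3 ≤ #N`. -/
structure IsFragment (G : SimpleGraph V) (N : Finset V) (𝒜 : Finset (Finset V)) : Prop where
  nonempty : 𝒜.Nonempty
  pairwiseDisjoint : (𝒜 : Set (Finset V)).PairwiseDisjoint id
  nonempty_of_mem : ∀ X ∈ 𝒜, X.Nonempty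
  isShore : ∀ X ∈ 𝒜, IsShore G N X
  two_le_card : 2 ≤ #N
  card_le : #N ≤ #𝒜 + 2
  odd_or_eq_singleton : (∀ X ∈ 𝒜, Odd #X) ∨ ∃ X, 𝒜 = {X} ∧ ∃ z, z ∉ X ∧ z ∉ N

theorem isFragment_singleton (hX : IsShore G N X) (hne : X.Nonempty) (h2 : 2 ≤ #N) (h3 : #N ≤ 3)
    {z : V} (hzX : z ∉ X) (hzN : z ∉ N) : IsFragment G N {X} where
  nonempty := singleton_nonempty X
  pairwiseDisjoint := by simp
  nonempty_of_mem := by simpa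
  isShore := by simpa
  two_le_card := h2
  card_le := by simpa
  odd_or_eq_singleton := .inr ⟨X, rfl, z, hzX, hzN⟩

theorem IsOddFamily.isFragment (h𝒟 : IsOddFamily G S 𝒟) (hne : 𝒟.Nonempty) (h2 : 2 ≤ #S)
    (hle : #S ≤ #𝒟 + 2) : IsFragment G S 𝒟 where
  nonempty := hne
  pairwiseDisjoint := h𝒟.pairwiseDisjoint
  nonempty_of_mem D hD := card_pos.1 (h𝒟.odd D hD).pos
  isShore := h𝒟.isShore
  two_le_card := h2
  card_le := hle
  odd_or_eq_singleton := .inl h𝒟.odd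

namespace IsFragment

theorem eq_of_mem (h : IsFragment G N 𝒜) (hX : X ∈ 𝒜) (hY : Y ∈ 𝒜) {v : V} (hvX : v ∈ X)
    (hvY : v ∈ Y) : X = Y :=
  h.pairwiseDisjoint.elim_finset hX hY v hvX hvY

theorem odd_of_nontrivial (h : IsFragment G N 𝒜) (h𝒜 : 𝒜.Nontrivial) : ∀ X ∈ 𝒜, Odd #X :=
  h.odd_or_eq_singleton.resolve_right fun ⟨_, hX, _⟩ => not_nontrivial_singleton (hX ▸ h𝒜)

end IsFragment

end Fragments

section MinimalFragments

variable {V : Type*} [DecidableEq V] {G : SimpleGraph V} {N S X : Finset V}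
  {𝒜 𝒟 : Finset (Finset V)}

/-- The set of vertices covered by a family. -/
abbrev verts (𝒜 : Finset (Finset V)) : Finset V := 𝒜.biUnion id

theorem mem_verts {v : V} : v ∈ verts 𝒜 ↔ ∃ X ∈ 𝒜, v ∈ X := mem_biUnion

theorem subset_verts (hX : X ∈ 𝒜) : X ⊆ verts 𝒜 := subset_biUnion_of_mem id hX

theorem verts_singleton : verts {X} = X := singleton_biUnion

theorem verts_ssubset_verts (hsub : ∀ D ∈ 𝒟, D ⊆ verts 𝒜) {v : V} (hv : v ∈ verts 𝒜)
    (hv𝒟 : ∀ D ∈ 𝒟, v ∉ D) : verts 𝒟 ⊂ verts 𝒜 :=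
  (ssubset_iff_of_subset (biUnion_subset.2 hsub)).2
    ⟨v, hv, fun hv' => by
      obtain ⟨D, hD, hvD⟩ := mem_verts.1 hv'
      exact hv𝒟 D hD hvD⟩

/-- A fragment covering as few vertices as possible. -/
structure IsMinFragment (G : SimpleGraph V) (N : Finset V) (𝒜 : Finset (Finset V)) : Prop
    extends IsFragment G N 𝒜 where
  card_verts_le : ∀ N' 𝒜', IsFragment G N' 𝒜' → #(verts 𝒜) ≤ #(verts 𝒜')

theorem IsFragment.exists_isMinFragment (h : IsFragment G N 𝒜) : ∃ N 𝒜, IsMinFragment G N 𝒜 := by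
  obtain ⟨p, hp, hmin⟩ := exists_minimalFor_of_wellFoundedLT
    (fun p : Finset V × Finset (Finset V) => IsFragment G p.1 p.2)
    (fun p => #(verts p.2)) ⟨(N, 𝒜), h⟩
  refine ⟨p.1, p.2, hp, fun N' 𝒜' h' => ?_⟩
  by_contra hlt
  exact hlt (hmin (j := (N', 𝒜')) h' (not_le.1 hlt).le)

namespace IsFragment

theorem disjoint_verts (h : IsFragment G N 𝒜) : Disjoint (verts 𝒜) N :=
  (disjoint_biUnion_left _ _ _).2 fun X hX => (h.isShore X hX).disjoint

theorem isShore_verts (h : IsFragment G N 𝒜) : IsShore G N (verts 𝒜) where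
  disjoint := h.disjoint_verts
  adj_mem x hx y hxy := by
    obtain ⟨X, hX, hxX⟩ := mem_verts.1 hx
    exact ((h.isShore X hX).adj_mem hxX hxy).imp_left fun hy => subset_verts hX hy

theorem card_sdiff_add (h : IsFragment G N 𝒜) (D : Finset V) :
    #(D \ (verts 𝒜 ∪ N)) + (#(verts 𝒜 ∩ D) + #(N ∩ D)) = #D := by
  rw [← card_union_of_disjoint (h.disjoint_verts.mono inter_subset_left inter_subset_left),
    ← union_inter_distrib_right, inter_comm, card_sdiff_add_card_inter]

theorem inter_sdiff_verts (h : IsFragment G N 𝒜) (T : Finset V) :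
    N ∩ (T \ verts 𝒜) = N ∩ T := by
  rw [← inter_sdiff_assoc, sdiff_eq_self_of_disjoint]
  exact h.disjoint_verts.symm.mono_left inter_subset_left

theorem card_inter_le_card_sdiff (h : IsFragment G N 𝒜) (T : Finset V) :
    #(N ∩ T) ≤ #(T \ verts 𝒜) := by
  rw [← h.inter_sdiff_verts]
  exact card_le_card inter_subset_right

theorem card_union_sdiff_add (h : IsFragment G N 𝒜) (T : Finset V) :
    #(N ∪ T \ verts 𝒜) + #(N ∩ T) = #N + #(T \ verts 𝒜) := by
  rw [← h.inter_sdiff_verts, card_union_add_card_inter]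

end IsFragment

namespace IsMinFragment

variable [Fintype V]

theorem four_le_card (h : IsMinFragment G N 𝒜) (hG : IsBrick G) (hX : IsShore G S X)
    (hne : X.Nonempty) (hXA : X ⊂ verts 𝒜) {z : V} (hzX : z ∉ X) (hzS : z ∉ S) : 4 ≤ #S := by
  have h3 := hG.1.three_le_card hX hne hzX hzS
  by_contra hlt
  have hle := h.card_verts_le S {X}
    (isFragment_singleton hX hne (by omega) (by omega) hzX hzS)
  rw [verts_singleton] at hle
  exact (card_lt_card hXA).not_ge hle

theorem card_add_three_le (h : IsMinFragment G N 𝒜) (hG : IsBrick G) (h𝒟 : IsOddFamily G S 𝒟)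
    (hne : 𝒟.Nonempty) (hssub : verts 𝒟 ⊂ verts 𝒜) : #𝒟 + 3 ≤ #S := by
  have hlt := card_lt_card hssub
  have h2 : 2 ≤ #S := by
    by_contra hS
    obtain ⟨D, hD⟩ := hne
    have hz : ∃ z, z ∉ D ∧ z ∉ S := by
      by_contra! hDS
      have hsub : verts 𝒜 ∪ N ⊆ D ∪ S := fun v _ => mem_union.2 (or_iff_not_imp_left.2 (hDS v))
      have hcard := (card_le_card hsub).trans (card_union_le D S)
      rw [card_union_of_disjoint h.disjoint_verts] at hcard
      have := card_le_card (subset_verts hD)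
      have := h.two_le_card
      omega
    obtain ⟨z, hzD, hzS⟩ := hz
    have := hG.1.three_le_card (h𝒟.isShore D hD) (card_pos.1 (h𝒟.odd D hD).pos) hzD hzS
    omega
  by_contra hle
  exact hlt.not_ge (h.card_verts_le S 𝒟 (h𝒟.isFragment hne h2 (by omega)))

theorem card_eq (h : IsMinFragment G N 𝒜) (hG : IsBrick G) : #N = #𝒜 + 2 := by
  refine h.card_le.antisymm ?_
  rcases h.odd_or_eq_singleton with hodd | ⟨X, rfl, z, hzX, hzN⟩
  · exact hG.card_add_two_le ⟨h.pairwiseDisjoint, hodd, h.isShore⟩ h.two_le_card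
  · exact hG.1.three_le_card (h.isShore X (mem_singleton_self X))
      (h.nonempty_of_mem X (mem_singleton_self X)) hzX hzN

theorem preconnected (h : IsMinFragment G N 𝒜) (hG : IsBrick G) (hX : X ∈ 𝒜) :
    (G.induce (X : Set V)).Preconnected := by
  have hcard := h.card_eq hG
  by_contra hnot
  rcases h.odd_or_eq_singleton with hodd | ⟨X', rfl, -⟩
  · obtain ⟨Y, hYX, hYodd, hY⟩ := exists_odd_closed_of_not_preconnected (hodd X hX) hnot
    have h𝒜 : IsOddFamily G N 𝒜 := ⟨h.pairwiseDisjoint, hodd, h.isShore⟩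
    obtain ⟨z, hzX, hzY⟩ := exists_of_ssubset hYX
    have hle := h.card_add_three_le hG (h𝒜.insert_erase hX hYX.subset hYodd hY)
      (insert_nonempty _ _) <| verts_ssubset_verts
        (forall_mem_insert _ _ _ |>.2 ⟨hYX.subset.trans (subset_verts hX),
          fun D hD => subset_verts (mem_of_mem_erase hD)⟩)
        (subset_verts hX hzX) <| forall_mem_insert _ _ _ |>.2 ⟨hzY, fun D hD hzD =>
          ne_of_mem_erase hD (h.eq_of_mem (mem_of_mem_erase hD) hX hzD hzX)⟩
    rw [h𝒜.card_insert_erase hX hYX.subset hYodd] at hle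
    omega
  · obtain rfl := mem_singleton.1 hX
    rw [induce_coe_preconnected_iff] at hnot
    push Not at hnot
    obtain ⟨Y, hYX, hYne, hY, hYX'⟩ := hnot
    have hssub := hYX.ssubset_of_ne hYX'
    obtain ⟨z, hzX, hzY⟩ := exists_of_ssubset hssub
    have hXN := h.isShore X hX
    have := h.four_le_card hG (hXN.of_closed hYX hY) hYne (by rwa [verts_singleton])
      hzY (Finset.disjoint_left.1 hXN.disjoint hzX)
    rw [card_singleton] at hcard
    omega

end IsMinFragment

end MinimalFragments

section FragmentsOfObstructions

variable {V : Type*} [DecidableEq V] {G : SimpleGraph V} {a b : V} {T E₁ E₂ : Finset V}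
  {𝒟 : Finset (Finset V)}

theorem IsEdgeSeparation.isFragment [Fintype V] (h : IsEdgeSeparation G a b T 𝒟 E₁ E₂)
    (hG : IsBrick G) (hdeg : ∀ v, 4 ≤ (G.neighborSet v).ncard) (hT : #T ≤ 2) :
    IsFragment G (insert b T) {E₁} := by
  obtain ⟨z, hz, hzb⟩ := h.exists_ne_snd hdeg hT
  have hzE : z ∉ E₁ := Finset.disjoint_right.1 h.disjoint_fst_snd hz
  have hzT : z ∉ insert b T := by
    simp [hzb, Finset.disjoint_left.1 (h.isShore E₂ h.snd_mem).disjoint hz]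
  have h3 := hG.1.three_le_card h.isShore_fst ⟨a, h.mem_fst⟩ hzE hzT
  have := card_insert_le b T
  exact isFragment_singleton h.isShore_fst ⟨a, h.mem_fst⟩ (by omega) (by omega) hzE hzT

theorem IsEdgeBarrier.isFragment (h : IsEdgeBarrier G a b T 𝒟 E₁ E₂) :
    IsFragment G (insert a T) (𝒟.erase E₁) := by
  have haT : a ∉ T := Finset.disjoint_left.1 (h.isShore E₁ h.fst_mem).disjoint h.mem_fst
  have hcard := h.card_eq
  have hinsert := card_insert_of_notMem haT
  have herase := card_erase_add_one h.fst_mem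
  have hE₂ : E₂ ∈ 𝒟.erase E₁ := mem_erase.2 ⟨h.fst_ne_snd.symm, h.snd_mem⟩
  have hpos := card_pos.2 ⟨E₂, hE₂⟩
  have hfamily : IsOddFamily G (insert a T) (𝒟.erase E₁) :=
    { pairwiseDisjoint := h.pairwiseDisjoint.subset (by simp)
      odd := fun D hD => h.odd D (mem_of_mem_erase hD)
      isShore := fun D hD =>
        h.isShore_insert_of_ne (mem_of_mem_erase hD) (ne_of_mem_erase hD) }
  exact hfamily.isFragment ⟨E₂, hE₂⟩ (by omega) (by omega)

theorem IsMinimalBrick.exists_isEdgeSeparation_or_exists_isEdgeBarrier [Fintype V]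
    (hG : IsMinimalBrick G) (hab : G.Adj a b) :
    (∃ T P Q, #T ≤ 2 ∧ IsEdgeSeparation G a b T {P, Q} P Q) ∨
      ∃ T 𝒟 E₁ E₂, IsEdgeBarrier G a b T 𝒟 E₁ E₂ := by
  by_cases h3 : IsThreeConnected (G.deleteEdges {s(a, b)})
  · have hnot := hG.2 s(a, b) hab
    simp only [IsBrick, h3, true_and, not_forall] at hnot
    obtain ⟨u, v, huv, hno⟩ := hnot
    exact .inr (hG.1.exists_isEdgeBarrier huv hno)
  · exact .inl (hG.1.1.exists_isEdgeSeparation h3)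

theorem IsMinimalBrick.exists_isMinFragment [Fintype V] (hG : IsMinimalBrick G)
    (hdeg : ∀ v, 4 ≤ (G.neighborSet v).ncard) (hab : G.Adj a b) :
    ∃ N 𝒜, IsMinFragment G N 𝒜 := by
  obtain ⟨T, P, Q, hT, h⟩ | ⟨T, 𝒟, E₁, E₂, h⟩ :=
    hG.exists_isEdgeSeparation_or_exists_isEdgeBarrier hab
  · exact (h.isFragment hG.1 hdeg hT).exists_isMinFragment
  · exact h.isFragment.exists_isMinFragment

end FragmentsOfObstructions

section Corners

variable {V : Type*} [DecidableEq V] {G : SimpleGraph V} {a b : V} {N S T X D : Finset V}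

theorem IsShore.sdiff_of_deleteEdges (hX : IsShore G N X)
    (hD : IsShore (G.deleteEdges {s(a, b)}) T D) (ha : a ∈ X) (hb : b ∈ N) :
    IsShore G (N ∩ D ∪ T \ X) (D \ (X ∪ N)) where
  disjoint := by
    have := Finset.disjoint_left.1 hD.disjoint
    rw [Finset.disjoint_left]
    grind
  adj_mem x hx y hxy := by
    have hyX : y ∉ X := fun hy => by
      have := hX.adj_mem hy hxy.symm
      grind
    have := hD.adj_mem_of_deleteEdges (mem_sdiff.1 hx).1 hxy
    grind

theorem IsShore.inter_of_deleteEdges (hX : IsShore G N X)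
    (hD : IsShore (G.deleteEdges {s(a, b)}) T D) (hb : b ∈ N) (hXT : X ∩ T ⊆ S)
    (hN : N ∩ (D ∪ T) ⊆ S) (hab : a ∈ X ∩ D → b ∈ S) (hS : S ⊆ T ∪ N) :
    IsShore G S (X ∩ D) where
  disjoint := by
    have := Finset.disjoint_left.1 hD.disjoint
    have := Finset.disjoint_left.1 hX.disjoint
    rw [Finset.disjoint_left]
    grind
  adj_mem x hx y hxy := by
    have := Finset.disjoint_left.1 hX.disjoint
    have := hX.adj_mem (mem_inter.1 hx).1 hxy
    have := hD.adj_mem_of_deleteEdges (mem_inter.1 hx).2 hxy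
    grind

end Corners

section SplitFamilies

variable {V : Type*} [DecidableEq V] {N T X D : Finset V} {𝒜 𝒥 : Finset (Finset V)}

/-- The members of `𝒜` contained in `D`. -/
def inside (𝒜 : Finset (Finset V)) (D : Finset V) : Finset (Finset V) := {X ∈ 𝒜 | X ⊆ D}

/-- The members of `𝒜` that meet `T`. -/
def meeting (𝒜 : Finset (Finset V)) (T : Finset V) : Finset (Finset V) :=
  {X ∈ 𝒜 | ¬ Disjoint X T}

theorem mem_inside : X ∈ inside 𝒜 D ↔ X ∈ 𝒜 ∧ X ⊆ D := mem_filter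

theorem mem_meeting : X ∈ meeting 𝒜 T ↔ X ∈ 𝒜 ∧ ¬ Disjoint X T := mem_filter

theorem card_inter_pos (h : X ∈ meeting 𝒜 T) : 0 < #(X ∩ T) :=
  card_pos.2 (not_disjoint_iff_nonempty_inter.1 (mem_meeting.1 h).2)

theorem card_le_sum_card_inter (h : 𝒥 ⊆ meeting 𝒜 T) : #𝒥 ≤ ∑ X ∈ 𝒥, #(X ∩ T) := by
  rw [card_eq_sum_ones]
  exact sum_le_sum fun X hX => card_inter_pos (h hX)

theorem card_inter_union_verts_le : #(N ∩ (verts 𝒥 ∪ T)) ≤ ∑ D ∈ 𝒥, #(N ∩ D) + #(N ∩ T) := by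
  rw [inter_union_distrib_left, inter_biUnion]
  exact (card_union_le _ _).trans (Nat.add_le_add_right card_biUnion_le _)

end SplitFamilies

section Crossings

variable {V : Type*} [Fintype V] [DecidableEq V] {G : SimpleGraph V} {a b : V}
  {N T E₁ E₂ X Y D : Finset V} {𝒜 𝒟 𝒥 : Finset (Finset V)}

/-- A separation at the edge `ab` facing a minimal fragment from which `ab` leaves at `a`, together
with a second edge of the fragment at `b`. -/
structure IsCrossing (G : SimpleGraph V) (a b : V) (N : Finset V) (𝒜 : Finset (Finset V))
    (T : Finset V) (𝒟 : Finset (Finset V)) (E₁ E₂ : Finset V) : Prop where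
  isBrick : IsBrick G
  isMinFragment : IsMinFragment G N 𝒜
  isEdgeSeparation : IsEdgeSeparation G a b T 𝒟 E₁ E₂
  fst_mem_verts : a ∈ verts 𝒜
  snd_mem : b ∈ N
  exists_adj : ∃ c ∈ verts 𝒜, c ≠ a ∧ G.Adj c b

namespace IsCrossing

theorem notMem_verts (h : IsCrossing G a b N 𝒜 T 𝒟 E₁ E₂) : b ∉ verts 𝒜 :=
  Finset.disjoint_right.1 h.isMinFragment.disjoint_verts h.snd_mem

theorem disjoint_of_mem (h : IsCrossing G a b N 𝒜 T 𝒟 E₁ E₂) (hD : D ∈ 𝒟) : Disjoint D T :=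
  (h.isEdgeSeparation.isShore D hD).disjoint

theorem sum_card_inter_add (h : IsCrossing G a b N 𝒜 T 𝒟 E₁ E₂) (Y : Finset V) :
    ∑ D ∈ 𝒟, #(Y ∩ D) + #(Y ∩ T) = #Y :=
  sum_card_inter_add_card_inter h.isEdgeSeparation.pairwiseDisjoint
    (fun _ => h.disjoint_of_mem) h.isEdgeSeparation.exists_mem Y

theorem exists_subset_of_disjoint (h : IsCrossing G a b N 𝒜 T 𝒟 E₁ E₂) (hX : X ∈ 𝒜)
    (hXT : Disjoint X T) : ∃ D ∈ 𝒟, X ⊆ D := by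
  obtain ⟨x, hx⟩ := h.isMinFragment.nonempty_of_mem X hX
  obtain ⟨D, hD, hxD⟩ := h.isEdgeSeparation.exists_mem x (Finset.disjoint_left.1 hXT hx)
  have hbX : b ∉ X := fun hb => h.notMem_verts (subset_verts hX hb)
  have hinter := induce_coe_preconnected_iff.1 (h.isMinFragment.preconnected h.isBrick hX) (X ∩ D)
    inter_subset_left ⟨x, mem_inter.2 ⟨hx, hxD⟩⟩ fun u hu y hy huy => by
      have := (h.isEdgeSeparation.isShore D hD).adj_mem_of_deleteEdges (mem_inter.1 hu).2 huy
      have := Finset.disjoint_left.1 hXT hy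
      grind
  exact ⟨D, hD, inter_eq_left.1 hinter⟩

theorem disjoint_inside (h : IsCrossing G a b N 𝒜 T 𝒟 E₁ E₂) (h𝒥 : 𝒥 ⊆ 𝒟) :
    (𝒥 : Set (Finset V)).PairwiseDisjoint (inside 𝒜) := fun D hD E hE hDE =>
  Finset.disjoint_left.2 fun X hXD hXE => by
    rw [mem_inside] at hXD hXE
    obtain ⟨x, hx⟩ := h.isMinFragment.nonempty_of_mem X hXD.1
    exact hDE (h.isEdgeSeparation.pairwiseDisjoint.elim_finset (h𝒥 hD) (h𝒥 hE) x
      (hXD.2 hx) (hXE.2 hx))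

theorem card_le_sum_card_inside_add (h : IsCrossing G a b N 𝒜 T 𝒟 E₁ E₂) :
    #𝒜 ≤ ∑ D ∈ 𝒟, #(inside 𝒜 D) + #(meeting 𝒜 T) := by
  rw [← card_biUnion (h.disjoint_inside subset_rfl)]
  refine (card_le_card fun X hX => ?_).trans (card_union_le _ _)
  rw [mem_union, mem_biUnion, mem_meeting]
  by_cases hXT : Disjoint X T
  · obtain ⟨D, hD, hXD⟩ := h.exists_subset_of_disjoint hX hXT
    exact .inl ⟨D, hD, mem_inside.2 ⟨hX, hXD⟩⟩
  · exact .inr ⟨hX, hXT⟩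

theorem sum_meeting_card_inter_le (h : IsCrossing G a b N 𝒜 T 𝒟 E₁ E₂) :
    ∑ X ∈ meeting 𝒜 T, #(X ∩ T) ≤ #(verts 𝒜 ∩ T) := by
  rw [← sum_card_inter h.isMinFragment.pairwiseDisjoint]
  exact sum_le_sum_of_subset (filter_subset _ _)

theorem eq_snd_of_adj (h : IsCrossing G a b N 𝒜 T 𝒟 E₁ E₂) {c : V} (hca : c ≠ a)
    (hc : c ∈ verts 𝒜) (hcb : G.Adj c b) (hD : D ∈ 𝒟) (hcD : c ∈ D) : D = E₂ := by
  have hcb' : c ≠ b := fun e => h.notMem_verts (e ▸ hc)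
  have hbT := Finset.disjoint_left.1 (h.disjoint_of_mem h.isEdgeSeparation.snd_mem)
    h.isEdgeSeparation.mem_snd
  refine h.isEdgeSeparation.eq_snd hD ?_
  have := (h.isEdgeSeparation.isShore D hD).adj_mem_of_deleteEdges hcD hcb
  tauto

theorem exists_not_subset (h : IsCrossing G a b N 𝒜 T 𝒟 E₁ E₂) (hD : D ∈ 𝒟) :
    ∃ X ∈ 𝒜, ¬ X ⊆ D := by
  obtain ⟨X, hX, haX⟩ := mem_verts.1 h.fst_mem_verts
  by_cases hXD : X ⊆ D
  · obtain ⟨c, hc, hca, hcb⟩ := h.exists_adj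
    obtain ⟨Y, hY, hcY⟩ := mem_verts.1 hc
    refine ⟨Y, hY, fun hYD => h.isEdgeSeparation.fst_ne_snd ?_⟩
    rw [← h.isEdgeSeparation.eq_fst hD (hXD haX), h.eq_snd_of_adj hca hc hcb hD (hYD hcY)]
  · exact ⟨X, hX, hXD⟩

theorem nontrivial_of_subset (h : IsCrossing G a b N 𝒜 T 𝒟 E₁ E₂) (hX : X ∈ 𝒜) (hD : D ∈ 𝒟)
    (hXD : X ⊆ D) : 𝒜.Nontrivial := by
  obtain ⟨Y, hY, hYD⟩ := h.exists_not_subset hD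
  exact ⟨X, hX, Y, hY, fun e => hYD (e ▸ hXD)⟩

end IsCrossing

end Crossings

section InsideFamilies

variable {V : Type*} [Fintype V] [DecidableEq V] {G : SimpleGraph V} {a b : V}
  {N S T E₁ E₂ X D : Finset V} {𝒜 𝒟 𝒥 : Finset (Finset V)}

namespace IsCrossing

theorem isOddFamily_biUnion_inside (h : IsCrossing G a b N 𝒜 T 𝒟 E₁ E₂) (h𝒥 : 𝒥 ⊆ 𝒟)
    (hSN : S ⊆ N) (hS : N ∩ (verts 𝒥 ∪ T) ⊆ S) (hb : E₁ ∈ 𝒥 → b ∈ S) :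
    IsOddFamily G S (𝒥.biUnion (inside 𝒜)) where
  pairwiseDisjoint := h.isMinFragment.pairwiseDisjoint.subset fun X hX => by
    obtain ⟨D, -, hXD⟩ := mem_biUnion.1 hX
    exact (mem_inside.1 hXD).1
  odd X hX := by
    obtain ⟨D, hD, hXD⟩ := mem_biUnion.1 hX
    rw [mem_inside] at hXD
    exact h.isMinFragment.odd_of_nontrivial (h.nontrivial_of_subset hXD.1 (h𝒥 hD) hXD.2) X hXD.1
  isShore X hX := by
    obtain ⟨D, hD, hXD⟩ := mem_biUnion.1 hX
    rw [mem_inside] at hXD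
    rw [← inter_eq_left.2 hXD.2]
    refine (h.isMinFragment.isShore X hXD.1).inter_of_deleteEdges
      (h.isEdgeSeparation.isShore D (h𝒥 hD)) h.snd_mem ?_ ?_ ?_ (hSN.trans subset_union_right)
    · rw [disjoint_iff_inter_eq_empty.1 ((h.disjoint_of_mem (h𝒥 hD)).mono_left hXD.2)]
      exact empty_subset S
    · exact (inter_subset_inter_left (union_subset_union_left (subset_verts hD))).trans hS
    · exact fun ha =>
        hb (h.isEdgeSeparation.eq_fst (h𝒥 hD) (mem_inter.1 ha).2 ▸ hD)

theorem verts_biUnion_inside_ssubset (h : IsCrossing G a b N 𝒜 T 𝒟 E₁ E₂) (hX : X ∈ 𝒜)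
    (hX𝒥 : X ∉ 𝒥.biUnion (inside 𝒜)) : verts (𝒥.biUnion (inside 𝒜)) ⊂ verts 𝒜 := by
  have hsub : 𝒥.biUnion (inside 𝒜) ⊆ 𝒜 := biUnion_subset.2 fun D _ => filter_subset _ _
  obtain ⟨x, hxX⟩ := h.isMinFragment.nonempty_of_mem X hX
  exact verts_ssubset_verts (fun Y hY => subset_verts (hsub hY)) (subset_verts hX hxX)
    fun Y hY hxY => hX𝒥 (h.isMinFragment.eq_of_mem hX (hsub hY) hxX hxY ▸ hY)

theorem sum_card_inside_add_three_le (h : IsCrossing G a b N 𝒜 T 𝒟 E₁ E₂) (h𝒥 : 𝒥 ⊆ 𝒟)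
    (hne : (𝒥.biUnion (inside 𝒜)).Nonempty) (hE₁ : E₁ ∉ 𝒥) :
    ∑ D ∈ 𝒥, #(inside 𝒜 D) + 3 ≤ ∑ D ∈ 𝒥, #(N ∩ D) + #(N ∩ T) := by
  obtain ⟨X, hX, haX⟩ := mem_verts.1 h.fst_mem_verts
  have := h.isMinFragment.card_add_three_le h.isBrick
    (h.isOddFamily_biUnion_inside h𝒥 inter_subset_left subset_rfl (absurd · hE₁)) hne <|
    h.verts_biUnion_inside_ssubset hX fun hX => by
      obtain ⟨D, hD, hXD⟩ := mem_biUnion.1 hX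
      exact hE₁ (h.isEdgeSeparation.eq_fst (h𝒥 hD) ((mem_inside.1 hXD).2 haX) ▸ hD)
  rw [card_biUnion (h.disjoint_inside h𝒥)] at this
  exact this.trans card_inter_union_verts_le

theorem sum_card_inside_add_two_le (h : IsCrossing G a b N 𝒜 T 𝒟 E₁ E₂) (h𝒥 : 𝒥 ⊆ 𝒟)
    (hne : (𝒥.biUnion (inside 𝒜)).Nonempty) :
    ∑ D ∈ 𝒥, #(inside 𝒜 D) + 2 ≤ ∑ D ∈ 𝒥, #(N ∩ D) + #(N ∩ T) := by
  obtain ⟨X, hX⟩ := hne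
  obtain ⟨D, hD, hXD⟩ := mem_biUnion.1 hX
  rw [mem_inside] at hXD
  rw [← card_biUnion (h.disjoint_inside h𝒥)]
  have hcard := card_inter_union_verts_le (N := N) (T := T) (𝒥 := 𝒥)
  by_cases hall : ∀ Y ∈ 𝒜, Y ∈ 𝒥.biUnion (inside 𝒜)
  · have hb : b ∈ N ∩ (verts 𝒥 ∪ T) := by
      obtain ⟨c, hc, hca, hcb⟩ := h.exists_adj
      obtain ⟨Y, hY, hcY⟩ := mem_verts.1 hc
      obtain ⟨E, hE, hYE⟩ := mem_biUnion.1 (hall Y hY)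
      have hEE₂ := h.eq_snd_of_adj hca hc hcb (h𝒥 hE) ((mem_inside.1 hYE).2 hcY)
      exact mem_inter.2 ⟨h.snd_mem, mem_union_left _ <| mem_verts.2
        ⟨E, hE, hEE₂ ▸ h.isEdgeSeparation.mem_snd⟩⟩
    have hfamily := h.isOddFamily_biUnion_inside h𝒥 inter_subset_left subset_rfl fun _ => hb
    obtain ⟨Y, hY, hYD⟩ := h.exists_not_subset (h𝒥 hD)
    obtain ⟨z, hzY, hzD⟩ := not_subset.1 hYD
    have hthree := h.isBrick.1.three_le_card (hfamily.isShore X hX)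
      (h.isMinFragment.nonempty_of_mem X hXD.1) (fun hzX => hzD (hXD.2 hzX))
      fun hz => Finset.disjoint_left.1 h.isMinFragment.disjoint_verts (subset_verts hY hzY)
        (mem_inter.1 hz).1
    have := h.isBrick.card_add_two_le hfamily (by omega)
    omega
  · push Not at hall
    obtain ⟨Y, hY, hYnot⟩ := hall
    have := h.isMinFragment.card_add_three_le h.isBrick
      (h.isOddFamily_biUnion_inside h𝒥 (insert_subset h.snd_mem inter_subset_left)
        (subset_insert b _) fun _ => mem_insert_self b _) ⟨X, hX⟩
      (h.verts_biUnion_inside_ssubset hY hYnot)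
    have := card_insert_le b (N ∩ (verts 𝒥 ∪ T))
    omega

end IsCrossing

end InsideFamilies

section OddFamilies

variable {V : Type*} [DecidableEq V] {G : SimpleGraph V} {S : Finset V}
  {𝒟 ℰ : Finset (Finset V)} {f : Finset V → Finset V}

theorem IsOddFamily.union (h𝒟 : IsOddFamily G S 𝒟) (hℰ : IsOddFamily G S ℰ)
    (hdisj : ∀ D ∈ 𝒟, ∀ E ∈ ℰ, Disjoint D E) : IsOddFamily G S (𝒟 ∪ ℰ) where
  pairwiseDisjoint := by
    rw [coe_union]
    exact h𝒟.pairwiseDisjoint.union hℰ.pairwiseDisjoint fun D hD E hE _ => hdisj D hD E hE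
  odd D hD := (mem_union.1 hD).elim (h𝒟.odd D) (hℰ.odd D)
  isShore D hD := (mem_union.1 hD).elim (h𝒟.isShore D) (hℰ.isShore D)

theorem IsOddFamily.card_union (h𝒟 : IsOddFamily G S 𝒟)
    (hdisj : ∀ D ∈ 𝒟, ∀ E ∈ ℰ, Disjoint D E) : #(𝒟 ∪ ℰ) = #𝒟 + #ℰ :=
  card_union_of_disjoint <| Finset.disjoint_left.2 fun D hD hE =>
    (card_pos.1 (h𝒟.odd D hD).pos).ne_empty <|
      (Finset.disjoint_self_iff_empty D).1 (hdisj D hD D hE)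

theorem isOddFamily_image (h𝒟 : (𝒟 : Set (Finset V)).PairwiseDisjoint id) (hf : ∀ D, f D ⊆ D)
    (hS : ∀ D ∈ 𝒟, IsShore G S (f D)) : IsOddFamily G S ({D ∈ 𝒟 | Odd #(f D)}.image f) where
  pairwiseDisjoint := by
    rw [coe_image]
    exact (h𝒟.subset (coe_subset.2 (filter_subset _ 𝒟))).image_of_le hf
  odd := by
    simp only [forall_mem_image, mem_filter]
    exact fun D hD => hD.2
  isShore := by
    simp only [forall_mem_image, mem_filter]
    exact fun D hD => hS D hD.1

theorem card_image_filter_odd (h𝒟 : (𝒟 : Set (Finset V)).PairwiseDisjoint id)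
    (hf : ∀ D, f D ⊆ D) : #({D ∈ 𝒟 | Odd #(f D)}.image f) = #{D ∈ 𝒟 | Odd #(f D)} := by
  refine card_image_of_injOn fun D hD E hE hDE => ?_
  rw [mem_coe, mem_filter] at hD hE
  obtain ⟨x, hx⟩ := card_pos.1 hD.2.pos
  exact h𝒟.elim_finset hD.1 hE.1 x (hf D hx) (hf E (hDE ▸ hx))

end OddFamilies

section BarrierCrossings

variable {V : Type*} [Fintype V] [DecidableEq V] {G : SimpleGraph V} {a b : V}
  {N T E₁ E₂ X D : Finset V} {𝒜 𝒟 : Finset (Finset V)}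

theorem IsCrossing.isShore_inter (h : IsCrossing G a b N 𝒜 T 𝒟 E₁ E₂) (hX : X ∈ 𝒜)
    (hD : D ∈ 𝒟) : IsShore G (N ∪ X ∩ T) (X ∩ D) :=
  (h.isMinFragment.isShore X hX).inter_of_deleteEdges (h.isEdgeSeparation.isShore D hD) h.snd_mem
    subset_union_right (inter_subset_left.trans subset_union_left)
    (fun _ => mem_union_left _ h.snd_mem)
    (union_comm T N ▸ union_subset_union_right inter_subset_right)

/-- Replacing `X` in `𝒜` by its odd intersections with members of `𝒟` gives an odd family for
`N ∪ X ∩ T` that covers fewer vertices. -/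
theorem IsCrossing.card_odd_inter_lt (h : IsCrossing G a b N 𝒜 T 𝒟 E₁ E₂)
    (h𝒜 : 𝒜.Nontrivial) (hX : X ∈ meeting 𝒜 T) :
    #{D ∈ 𝒟 | Odd #(X ∩ D)} < #(X ∩ T) := by
  have hT := h.isEdgeSeparation
  have hA := h.isMinFragment
  have hodd := hA.odd_of_nontrivial h𝒜
  obtain ⟨hXA, hXT⟩ := mem_meeting.1 hX
  obtain ⟨t, htX, htT⟩ := not_disjoint_iff.1 hXT
  have hdisj : ∀ Y ∈ 𝒜.erase X, Disjoint Y X := fun Y hY =>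
    hA.pairwiseDisjoint (mem_of_mem_erase hY) hXA (ne_of_mem_erase hY)
  have herase : IsOddFamily G (N ∪ X ∩ T) (𝒜.erase X) :=
    { pairwiseDisjoint := hA.pairwiseDisjoint.subset (by simp)
      odd := fun Y hY => hodd Y (mem_of_mem_erase hY)
      isShore := fun Y hY =>
        (hA.isShore Y (mem_of_mem_erase hY)).mono_left subset_union_left <|
          disjoint_union_right.2 ⟨(hA.isShore Y (mem_of_mem_erase hY)).disjoint,
            (hdisj Y hY).mono_right inter_subset_left⟩ }
  have hcorners := isOddFamily_image hT.pairwiseDisjoint (f := (X ∩ ·))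
    (fun _ => inter_subset_right) fun D hD => h.isShore_inter hXA hD
  have hdisj' : ∀ Y ∈ 𝒜.erase X, ∀ Z ∈ {D ∈ 𝒟 | Odd #(X ∩ D)}.image (X ∩ ·), Disjoint Y Z := by
    simp only [forall_mem_image]
    exact fun Y hY D _ => (hdisj Y hY).mono_right inter_subset_left
  have hcard := hA.card_add_three_le h.isBrick (herase.union hcorners hdisj')
    ((h𝒜.erase_nonempty).mono subset_union_left) <| by
      refine verts_ssubset_verts ?_ (subset_verts hXA htX) ?_ <;>
        simp only [forall_mem_union, forall_mem_image]
      · exact ⟨fun Y hY => subset_verts (mem_of_mem_erase hY),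
          fun D _ => inter_subset_left.trans (subset_verts hXA)⟩
      · exact ⟨fun Y hY htY => Finset.disjoint_left.1 (hdisj Y hY) htY htX,
          fun D hD htD => Finset.disjoint_left.1 (h.disjoint_of_mem (mem_filter.1 hD).1)
            (mem_inter.1 htD).2 htT⟩
  rw [herase.card_union hdisj', card_image_filter_odd hT.pairwiseDisjoint
    (fun _ => inter_subset_right), card_erase_of_mem hXA] at hcard
  have hparity := h.sum_card_inter_add X ▸ hodd X hXA
  have := hA.card_eq h.isBrick
  have := card_union_le N (X ∩ T)
  rw [Nat.odd_add, odd_sum_iff_odd_card_odd] at hparity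
  grind

theorem IsCrossing.isShore_sdiff (h : IsCrossing G a b N 𝒜 T 𝒟 E₁ E₂) (hD : D ∈ 𝒟) :
    IsShore G (N ∩ D ∪ T \ verts 𝒜) (D \ (verts 𝒜 ∪ N)) :=
  h.isMinFragment.isShore_verts.sdiff_of_deleteEdges (h.isEdgeSeparation.isShore D hD)
    h.fst_mem_verts h.snd_mem

theorem IsCrossing.three_le_of_not_subset (h : IsCrossing G a b N 𝒜 T 𝒟 E₁ E₂) (hD : D ∈ 𝒟)
    (hDA : ¬ D ⊆ verts 𝒜 ∪ N) : 3 ≤ #(N ∩ D) + #(T \ verts 𝒜) := by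
  have ha := h.fst_mem_verts
  have haN := Finset.disjoint_left.1 h.isMinFragment.disjoint_verts ha
  exact (h.isBrick.1.three_le_card (h.isShore_sdiff hD) (sdiff_nonempty.2 hDA) (z := a)
    (by grind) (by grind)).trans (card_union_le _ _)

/-- The brick inequality for `N ∪ T \ verts 𝒜`, with `𝒜` and the odd sets `D \ (verts 𝒜 ∪ N)` as
the odd family. -/
theorem IsEdgeBarrier.card_inter_add_card_inter_le (hB : IsEdgeBarrier G a b T 𝒟 E₁ E₂)
    (h : IsCrossing G a b N 𝒜 T 𝒟 E₁ E₂) (hodd : ∀ X ∈ 𝒜, Odd #X) :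
    #(verts 𝒜 ∩ T) + #(N ∩ T) ≤ #{D ∈ 𝒟 | Odd (#(verts 𝒜 ∩ D) + #(N ∩ D))} := by
  have hA := h.isMinFragment
  have hfamily : IsOddFamily G (N ∪ T \ verts 𝒜) 𝒜 :=
    { pairwiseDisjoint := hA.pairwiseDisjoint
      odd := hodd
      isShore := fun X hX => (hA.isShore X hX).mono_left subset_union_left <|
        disjoint_union_right.2
          ⟨(hA.isShore X hX).disjoint, disjoint_sdiff.mono_left (subset_verts hX)⟩ }
  have hcorners := isOddFamily_image (S := N ∪ T \ verts 𝒜) hB.pairwiseDisjoint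
    (f := (· \ (verts 𝒜 ∪ N))) (fun _ => sdiff_subset) fun D hD =>
      (h.isShore_sdiff hD).mono_left (union_subset_union_left inter_subset_left) <|
        disjoint_union_right.2 ⟨sdiff_disjoint.mono_right subset_union_right,
          (h.disjoint_of_mem hD).mono sdiff_subset sdiff_subset⟩
  have hdisj : ∀ X ∈ 𝒜, ∀ Z ∈ {D ∈ 𝒟 | Odd #(D \ (verts 𝒜 ∪ N))}.image (· \ (verts 𝒜 ∪ N)),
      Disjoint X Z := by
    simp only [forall_mem_image]
    exact fun X hX D _ => disjoint_sdiff.mono_left ((subset_verts hX).trans subset_union_left)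
  have hNA := hA.card_eq h.isBrick
  have hcard := h.isBrick.card_add_two_le (hfamily.union hcorners hdisj)
    (hA.two_le_card.trans (card_le_card subset_union_left))
  rw [hfamily.card_union hdisj, card_image_filter_odd hB.pairwiseDisjoint
    fun _ => sdiff_subset] at hcard
  have hcompl : {D ∈ 𝒟 | Odd #(D \ (verts 𝒜 ∪ N))} =
      {D ∈ 𝒟 | ¬ Odd (#(verts 𝒜 ∩ D) + #(N ∩ D))} := filter_congr fun D hD => by
    have := hA.card_sdiff_add D
    have := hB.odd D hD
    grind
  have hsplit := card_filter_add_card_filter_not (s := 𝒟)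
    fun D => Odd (#(verts 𝒜 ∩ D) + #(N ∩ D))
  rw [← hcompl, ← hB.card_eq, ← card_sdiff_add_card_inter T (verts 𝒜)] at hsplit
  rw [inter_comm (verts 𝒜) T]
  have := hA.card_union_sdiff_add T
  omega

theorem IsCrossing.odd_card_inter_iff (h : IsCrossing G a b N 𝒜 T 𝒟 E₁ E₂)
    (hodd : ∀ X ∈ 𝒜, Odd #X) (hD : D ∈ 𝒟) (hmeet : ∀ X ∈ meeting 𝒜 T, ¬ Odd #(X ∩ D)) :
    Odd #(verts 𝒜 ∩ D) ↔ Odd #(inside 𝒜 D) := by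
  have hinside : {X ∈ 𝒜 | Odd #(X ∩ D)} = inside 𝒜 D := filter_congr fun X hX => by
    refine ⟨fun hXD => ?_, fun hXD => by rw [inter_eq_left.2 hXD]; exact hodd X hX⟩
    have hXT : Disjoint X T := by
      by_contra hXT
      exact hmeet X (mem_meeting.2 ⟨hX, hXT⟩) hXD
    obtain ⟨E, hE, hXE⟩ := h.exists_subset_of_disjoint hX hXT
    obtain ⟨x, hx⟩ := card_pos.1 hXD.pos
    rw [mem_inter] at hx
    exact h.isEdgeSeparation.pairwiseDisjoint.elim_finset hE hD x (hXE hx.1) hx.2 ▸ hXE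
  rw [← sum_card_inter h.isMinFragment.pairwiseDisjoint, odd_sum_iff_odd_card_odd, hinside]

theorem IsEdgeBarrier.card_meeting_add_card_inter_le (hB : IsEdgeBarrier G a b T 𝒟 E₁ E₂)
    (h : IsCrossing G a b N 𝒜 T 𝒟 E₁ E₂) (h𝒜 : 𝒜.Nontrivial) :
    #(meeting 𝒜 T) + #(N ∩ T) ≤ #{D ∈ 𝒟 | Odd (#(N ∩ D) + #(inside 𝒜 D))} := by
  have hodd := h.isMinFragment.odd_of_nontrivial h𝒜
  have hsub : {D ∈ 𝒟 | Odd (#(verts 𝒜 ∩ D) + #(N ∩ D))} ⊆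
      {D ∈ 𝒟 | Odd (#(N ∩ D) + #(inside 𝒜 D))} ∪
        (meeting 𝒜 T).biUnion fun X => {D ∈ 𝒟 | Odd #(X ∩ D)} := fun D hD => by
    simp only [mem_union, mem_biUnion, mem_filter] at hD ⊢
    by_cases hmeet : ∀ X ∈ meeting 𝒜 T, ¬ Odd #(X ∩ D)
    · have := h.odd_card_inter_iff hodd hD.1 hmeet
      grind
    · push Not at hmeet
      obtain ⟨X, hX, hXD⟩ := hmeet
      exact .inr ⟨X, hX, hD.1, hXD⟩
  have hmeeting : ∑ X ∈ meeting 𝒜 T, #{D ∈ 𝒟 | Odd #(X ∩ D)} + #(meeting 𝒜 T) ≤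
      #(verts 𝒜 ∩ T) := by
    rw [card_eq_sum_ones, ← sum_add_distrib]
    exact (sum_le_sum fun X => h.card_odd_inter_lt h𝒜).trans h.sum_meeting_card_inter_le
  have hlower := hB.card_inter_add_card_inter_le h hodd
  have hupper := (card_le_card hsub).trans
    ((card_union_le _ _).trans (Nat.add_le_add_left card_biUnion_le _))
  omega

theorem IsEdgeBarrier.sum_card_inter_le (hB : IsEdgeBarrier G a b T 𝒟 E₁ E₂)
    (h : IsCrossing G a b N 𝒜 T 𝒟 E₁ E₂) (h𝒜 : 𝒜.Nontrivial) :
    ∑ D ∈ 𝒟 with #(N ∩ D) ≤ #(inside 𝒜 D), #(N ∩ D) + #(N ∩ T) ≤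
      ∑ D ∈ 𝒟 with #(N ∩ D) ≤ #(inside 𝒜 D), #(inside 𝒜 D) + 1 := by
  have hodd := hB.card_meeting_add_card_inter_le h h𝒜
  have hN := h.sum_card_inter_add N
  have hA := h.card_le_sum_card_inside_add
  have hcard := h.isMinFragment.card_eq h.isBrick
  rw [← sum_filter_add_sum_filter_not 𝒟 (fun D => #(N ∩ D) ≤ #(inside 𝒜 D))] at hN hA
  rw [card_filter, ← sum_filter_add_sum_filter_not 𝒟 (fun D => #(N ∩ D) ≤ #(inside 𝒜 D))] at hodd
  have hsmall : ∑ D ∈ 𝒟 with #(N ∩ D) ≤ #(inside 𝒜 D),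
      (#(N ∩ D) + if Odd (#(N ∩ D) + #(inside 𝒜 D)) then 1 else 0) ≤
      ∑ D ∈ 𝒟 with #(N ∩ D) ≤ #(inside 𝒜 D), #(inside 𝒜 D) := sum_le_sum fun D hD => by
    have := (mem_filter.1 hD).2
    grind
  have hlarge : ∑ D ∈ 𝒟 with ¬ #(N ∩ D) ≤ #(inside 𝒜 D),
      (#(inside 𝒜 D) + if Odd (#(N ∩ D) + #(inside 𝒜 D)) then 1 else 0) ≤
      ∑ D ∈ 𝒟 with ¬ #(N ∩ D) ≤ #(inside 𝒜 D), #(N ∩ D) := sum_le_sum fun D hD => by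
    have := (mem_filter.1 hD).2
    grind
  rw [sum_add_distrib] at hsmall hlarge
  omega

end BarrierCrossings

section BarrierCounting

variable {V : Type*} [Fintype V] [DecidableEq V] {G : SimpleGraph V} {a b : V}
  {N T E₁ E₂ X D : Finset V} {𝒜 𝒟 : Finset (Finset V)}

namespace IsEdgeBarrier

theorem card_inside_lt (hB : IsEdgeBarrier G a b T 𝒟 E₁ E₂) (h : IsCrossing G a b N 𝒜 T 𝒟 E₁ E₂)
    (hD : D ∈ 𝒟) (hX : X ∈ inside 𝒜 D) : #(inside 𝒜 D) < #(N ∩ D) := by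
  have hXD := mem_inside.1 hX
  by_contra! hle
  have hupper := hB.sum_card_inter_le h (h.nontrivial_of_subset hXD.1 hD hXD.2)
  have hlower := h.sum_card_inside_add_two_le (filter_subset (fun D => #(N ∩ D) ≤ #(inside 𝒜 D)) 𝒟)
    ⟨X, mem_biUnion.2 ⟨D, mem_filter.2 ⟨hD, hle⟩, hX⟩⟩
  omega

theorem exists_subset_of_not_disjoint (hB : IsEdgeBarrier G a b T 𝒟 E₁ E₂)
    (h : IsCrossing G a b N 𝒜 T 𝒟 E₁ E₂) (hD : D ∈ 𝒟) (hND : N ∩ D = ∅)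
    (hDA : ¬ Disjoint D (verts 𝒜)) : ∃ X ∈ meeting 𝒜 T, D ⊆ X := by
  obtain ⟨x, hxD, hxA⟩ := not_disjoint_iff.1 hDA
  obtain ⟨X, hX, hxX⟩ := mem_verts.1 hxA
  have hDX : D ⊆ X := inter_eq_right.1 <| induce_coe_preconnected_iff.1 (hB.preconnected D hD)
    (X ∩ D) inter_subset_right ⟨x, mem_inter.2 ⟨hxX, hxD⟩⟩ fun u hu v hv huv =>
      mem_inter.2 ⟨((h.isMinFragment.isShore X hX).adj_mem (mem_inter.1 hu).1 huv).resolve_right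
        fun hvN => notMem_empty v (hND ▸ mem_inter.2 ⟨hvN, hv⟩), hv⟩
  refine ⟨X, mem_meeting.2 ⟨hX, fun hXT => ?_⟩, hDX⟩
  obtain ⟨E, hE, hXE⟩ := h.exists_subset_of_disjoint hX hXT
  have hDE := hB.pairwiseDisjoint.elim_finset hD hE x hxD (hXE hxX)
  have := hB.card_inside_lt h hD (mem_inside.2 ⟨hX, hDE ▸ hXE⟩)
  simp [hND] at this

theorem card_le_add_sum_card_inside (hB : IsEdgeBarrier G a b T 𝒟 E₁ E₂)
    (h : IsCrossing G a b N 𝒜 T 𝒟 E₁ E₂) :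
    #𝒟 ≤ #{D ∈ 𝒟 | (N ∩ D).Nonempty} + #{D ∈ 𝒟 | Disjoint D (verts 𝒜 ∪ N)} +
      ∑ X ∈ meeting 𝒜 T, #(inside 𝒟 X) := by
  have hsub : 𝒟 ⊆ {D ∈ 𝒟 | (N ∩ D).Nonempty} ∪ {D ∈ 𝒟 | Disjoint D (verts 𝒜 ∪ N)} ∪
      (meeting 𝒜 T).biUnion (inside 𝒟) := fun D hD => by
    simp only [mem_union, mem_filter, mem_biUnion, mem_inside, hD, true_and]
    by_cases hND : (N ∩ D).Nonempty
    · exact .inl (.inl hND)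
    · rw [not_nonempty_iff_eq_empty] at hND
      by_cases hDA : Disjoint D (verts 𝒜)
      · exact .inl (.inr (disjoint_union_right.2
          ⟨hDA, (disjoint_iff_inter_eq_empty.2 hND).symm⟩))
      · exact .inr (hB.exists_subset_of_not_disjoint h hD hND hDA)
  exact (card_le_card hsub).trans ((card_union_le _ _).trans
    (Nat.add_le_add (card_union_le _ _) card_biUnion_le))

theorem card_disjoint_eq_zero_or_add_two_le (hB : IsEdgeBarrier G a b T 𝒟 E₁ E₂)
    (h : IsCrossing G a b N 𝒜 T 𝒟 E₁ E₂) :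
    #{D ∈ 𝒟 | Disjoint D (verts 𝒜 ∪ N)} = 0 ∨
      #{D ∈ 𝒟 | Disjoint D (verts 𝒜 ∪ N)} + 2 ≤ #(T \ verts 𝒜) := by
  have hfamily : IsOddFamily G (T \ verts 𝒜) {D ∈ 𝒟 | Disjoint D (verts 𝒜 ∪ N)} :=
    { pairwiseDisjoint := hB.pairwiseDisjoint.subset (coe_subset.2 (filter_subset _ 𝒟))
      odd := fun D hD => hB.odd D (mem_filter.1 hD).1
      isShore := fun D hD => by
        obtain ⟨hD, hdisj⟩ := mem_filter.1 hD
        have hND : N ∩ D = ∅ :=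
          disjoint_iff_inter_eq_empty.1 (disjoint_union_right.1 hdisj).2.symm
        simpa only [hND, empty_union, sdiff_eq_self_of_disjoint hdisj] using h.isShore_sdiff hD }
  rw [or_iff_not_imp_left, card_eq_zero, ← ne_eq, ← nonempty_iff_ne_empty]
  rintro ⟨D, hD⟩
  have hdisj := disjoint_union_right.1 (mem_filter.1 hD).2
  have := h.isBrick.1.three_le_card (hfamily.isShore D hD)
    (card_pos.1 (hfamily.odd D hD).pos) (Finset.disjoint_right.1 hdisj.1 h.fst_mem_verts)
    fun ha => (mem_sdiff.1 ha).2 h.fst_mem_verts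
  exact h.isBrick.card_add_two_le hfamily (by omega)

theorem card_inside_add_two_le (hB : IsEdgeBarrier G a b T 𝒟 E₁ E₂)
    (h : IsCrossing G a b N 𝒜 T 𝒟 E₁ E₂) (hX : X ∈ meeting 𝒜 T) (hne : (inside 𝒟 X).Nonempty) :
    #(inside 𝒟 X) + 2 ≤ #(X ∩ T) + #(N ∩ T) := by
  obtain ⟨hXA, hXT⟩ := mem_meeting.1 hX
  obtain ⟨t, htX, htT⟩ := not_disjoint_iff.1 hXT
  have hXN := h.isMinFragment.isShore X hXA
  have hfamily : IsOddFamily G (insert b (X ∩ T ∪ N ∩ T)) (inside 𝒟 X) :=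
    { pairwiseDisjoint := hB.pairwiseDisjoint.subset (coe_subset.2 (filter_subset _ 𝒟))
      odd := fun D hD => hB.odd D (mem_inside.1 hD).1
      isShore := fun D hD => by
        obtain ⟨hD, hDX⟩ := mem_inside.1 hD
        have hND : N ∩ D = ∅ :=
          disjoint_iff_inter_eq_empty.1 (hXN.disjoint.symm.mono_right hDX)
        rw [← inter_eq_right.2 hDX]
        refine hXN.inter_of_deleteEdges (hB.isShore D hD) h.snd_mem ?_ ?_ ?_ ?_
        · exact subset_union_left.trans (subset_insert _ _)
        · rw [inter_union_distrib_left, hND, empty_union]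
          exact subset_union_right.trans (subset_insert _ _)
        · exact fun _ => mem_insert_self _ _
        · exact insert_subset (mem_union_right _ h.snd_mem) (by grind) }
  have := h.isMinFragment.card_add_three_le h.isBrick hfamily hne <| verts_ssubset_verts
    (fun D hD => (mem_inside.1 hD).2.trans (subset_verts hXA)) (subset_verts hXA htX)
    fun D hD htD => Finset.disjoint_left.1 (h.disjoint_of_mem (mem_inside.1 hD).1) htD htT
  have := card_insert_le b (X ∩ T ∪ N ∩ T)
  have := card_union_le (X ∩ T) (N ∩ T)
  omega

theorem card_inter_le_one (hB : IsEdgeBarrier G a b T 𝒟 E₁ E₂)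
    (h : IsCrossing G a b N 𝒜 T 𝒟 E₁ E₂) : #(N ∩ T) ≤ 1 := by
  obtain ⟨X, rfl⟩ | h𝒜 := h.isMinFragment.nonempty.exists_eq_singleton_or_nontrivial
  · have hXT : ¬ Disjoint X T := fun hXT => by
      obtain ⟨D, hD, hXD⟩ := h.exists_subset_of_disjoint (mem_singleton_self X) hXT
      exact not_nontrivial_singleton (h.nontrivial_of_subset (mem_singleton_self X) hD hXD)
    have hmeeting : meeting {X} T = {X} := by simp [meeting, filter_singleton, hXT]
    have hN := h.sum_card_inter_add N
    have hNX := h.isMinFragment.card_eq h.isBrick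
    have htouched : #{D ∈ 𝒟 | (N ∩ D).Nonempty} ≤ ∑ D ∈ 𝒟, #(N ∩ D) := by
      rw [card_filter]
      exact sum_le_sum fun D _ => by split_ifs with hND <;> simp [hND]
    have hcount := hB.card_le_add_sum_card_inside h
    have hfar := hB.card_disjoint_eq_zero_or_add_two_le h
    have hinside := hB.card_inside_add_two_le h (hmeeting ▸ mem_singleton_self X)
    have hT := card_sdiff_add_card_inter T X
    have hNT := h.isMinFragment.card_inter_le_card_sdiff T
    rw [verts_singleton, hmeeting, sum_singleton, ← hB.card_eq] at hcount
    rw [verts_singleton] at hfar hNT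
    rw [card_singleton] at hNX
    rw [inter_comm] at hT
    rw [← card_pos] at hinside
    omega
  · have hle := hB.sum_card_inter_le h h𝒜
    rw [sum_eq_zero (f := fun D => #(inside 𝒜 D))] at hle
    · omega
    · intro D hD
      by_contra hne
      obtain ⟨X, hX⟩ := card_ne_zero.1 hne
      exact (mem_filter.1 hD).2.not_gt (hB.card_inside_lt h (mem_filter.1 hD).1 hX)

end IsEdgeBarrier

end BarrierCounting

section BarrierContradiction

variable {V : Type*} [Fintype V] [DecidableEq V] {G : SimpleGraph V} {a b : V}
  {N T E₁ E₂ X D : Finset V} {𝒜 𝒟 : Finset (Finset V)}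

theorem IsCrossing.three_le_card_inter_add (h : IsCrossing G a b N 𝒜 T 𝒟 E₁ E₂)
    (hX : X ∈ meeting 𝒜 T) (haX : a ∈ X) {z : V} (hzE : z ∉ E₁) (hzb : z ≠ b)
    (hzT : z ∈ T → z ∉ X ∪ N) : 3 ≤ #(X ∩ T) + #(N ∩ E₁) + #(N ∩ T) := by
  obtain ⟨hXA, hXT⟩ := mem_meeting.1 hX
  obtain ⟨t, htX, htT⟩ := not_disjoint_iff.1 hXT
  have hshore : IsShore G (insert b (X ∩ T ∪ N ∩ (E₁ ∪ T))) (X ∩ E₁) :=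
    (h.isMinFragment.isShore X hXA).inter_of_deleteEdges
      (h.isEdgeSeparation.isShore E₁ h.isEdgeSeparation.fst_mem) h.snd_mem
      (subset_union_left.trans (subset_insert _ _)) (subset_union_right.trans (subset_insert _ _))
      (fun _ => mem_insert_self _ _) (insert_subset (mem_union_right _ h.snd_mem) (by grind))
  have hssub : X ∩ E₁ ⊂ verts 𝒜 :=
    (ssubset_iff_of_subset (inter_subset_left.trans (subset_verts hXA))).2
      ⟨t, subset_verts hXA htX, fun ht => Finset.disjoint_left.1
        (h.disjoint_of_mem h.isEdgeSeparation.fst_mem) (mem_inter.1 ht).2 htT⟩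
  have := h.isMinFragment.four_le_card h.isBrick hshore
    ⟨a, mem_inter.2 ⟨haX, h.isEdgeSeparation.mem_fst⟩⟩ hssub (z := z) (by grind) (by grind)
  have := card_insert_le b (X ∩ T ∪ N ∩ (E₁ ∪ T))
  have := card_union_le (X ∩ T) (N ∩ (E₁ ∪ T))
  have := card_union_le (N ∩ E₁) (N ∩ T)
  rw [← inter_union_distrib_left] at this
  omega

namespace IsEdgeBarrier

theorem card_inside_lt_card_inter (hB : IsEdgeBarrier G a b T 𝒟 E₁ E₂)
    (h : IsCrossing G a b N 𝒜 T 𝒟 E₁ E₂) (hX : X ∈ meeting 𝒜 T) :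
    #(inside 𝒟 X) < #(X ∩ T) := by
  have := hB.card_inside_add_two_le h hX
  have := hB.card_inter_le_one h
  have := card_inter_pos hX
  rw [← card_pos] at *
  omega

theorem sum_card_inside_add_le (hB : IsEdgeBarrier G a b T 𝒟 E₁ E₂)
    (h : IsCrossing G a b N 𝒜 T 𝒟 E₁ E₂) :
    ∑ X ∈ meeting 𝒜 T, #(inside 𝒟 X) + #(meeting 𝒜 T) ≤ #(verts 𝒜 ∩ T) := by
  rw [card_eq_sum_ones, ← sum_add_distrib]
  exact (sum_le_sum fun X => hB.card_inside_lt_card_inter h).trans h.sum_meeting_card_inter_le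

theorem sum_card_inside_add_lt (hB : IsEdgeBarrier G a b T 𝒟 E₁ E₂)
    (h : IsCrossing G a b N 𝒜 T 𝒟 E₁ E₂) (hX : X ∈ meeting 𝒜 T)
    (hlt : #(inside 𝒟 X) + 1 < #(X ∩ T)) :
    ∑ X ∈ meeting 𝒜 T, #(inside 𝒟 X) + #(meeting 𝒜 T) < #(verts 𝒜 ∩ T) := by
  rw [card_eq_sum_ones, ← sum_add_distrib]
  exact (sum_lt_sum (fun X => hB.card_inside_lt_card_inter h) ⟨X, hX, hlt⟩).trans_le
    h.sum_meeting_card_inter_le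

theorem card_inside_fst_add_two_le_or (hB : IsEdgeBarrier G a b T 𝒟 E₁ E₂)
    (h : IsCrossing G a b N 𝒜 T 𝒟 E₁ E₂) (hNT : N ∩ T = ∅) :
    #(inside 𝒜 E₁) + 2 ≤ #(N ∩ E₁) ∨
      ∑ X ∈ meeting 𝒜 T, #(inside 𝒟 X) + #(meeting 𝒜 T) < #(verts 𝒜 ∩ T) := by
  by_cases hne : (inside 𝒜 E₁).Nonempty
  · have := h.sum_card_inside_add_two_le (singleton_subset_iff.2 hB.fst_mem)
      (by rwa [singleton_biUnion])
    simp only [sum_singleton, hNT, card_empty, add_zero] at this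
    exact .inl this
  · obtain ⟨X, hX, haX⟩ := mem_verts.1 h.fst_mem_verts
    have hXmeet : X ∈ meeting 𝒜 T := mem_meeting.2 ⟨hX, fun hXT => by
      obtain ⟨D, hD, hXD⟩ := h.exists_subset_of_disjoint hX hXT
      exact hne ⟨X, mem_inside.2 ⟨hX, hB.eq_fst hD (hXD haX) ▸ hXD⟩⟩⟩
    refine or_iff_not_imp_right.2 fun hlt => ?_
    have hinside := hB.card_inside_add_two_le h hXmeet
    have hle := mt (hB.sum_card_inside_add_lt h hXmeet) hlt
    have hcard : #(X ∩ T) ≤ 1 := by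
      rw [← card_pos, hNT, card_empty] at hinside
      omega
    have hT : 1 < #T := by
      rw [hB.card_eq]
      exact one_lt_card.2 ⟨E₁, hB.fst_mem, E₂, hB.snd_mem, hB.fst_ne_snd⟩
    obtain ⟨z, hzT, hzX⟩ : ∃ z ∈ T, z ∉ X := by
      by_contra! hTX
      rw [inter_eq_right.2 hTX] at hcard
      omega
    have := h.three_le_card_inter_add hXmeet haX (z := z)
      (Finset.disjoint_right.1 (h.disjoint_of_mem hB.fst_mem) hzT)
      (fun hzb => Finset.disjoint_right.1 (h.disjoint_of_mem hB.snd_mem) hzT (hzb ▸ hB.mem_snd))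
      (fun _ hz => (mem_union.1 hz).elim hzX fun hzN => notMem_empty z
        (hNT ▸ mem_inter.2 ⟨hzN, hzT⟩))
    rw [hNT, card_empty] at this
    rw [not_nonempty_iff_eq_empty] at hne
    rw [hne, card_empty]
    omega

/-- The subtractions truncate only when `N` misses `D`. -/
theorem card_sdiff_add_sum_le_one (hB : IsEdgeBarrier G a b T 𝒟 E₁ E₂)
    (h : IsCrossing G a b N 𝒜 T 𝒟 E₁ E₂) :
    #(T \ verts 𝒜) + ∑ D ∈ 𝒟.erase E₁, (#(N ∩ D) - #(inside 𝒜 D) - 1) ≤ 1 := by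
  have hexcess : ∑ D ∈ 𝒟, #(N ∩ D) = ∑ D ∈ 𝒟, #(inside 𝒜 D) + #{D ∈ 𝒟 | (N ∩ D).Nonempty} +
      ∑ D ∈ 𝒟, (#(N ∩ D) - #(inside 𝒜 D) - 1) := by
    rw [card_filter, ← sum_add_distrib, ← sum_add_distrib]
    refine sum_congr rfl fun D hD => ?_
    obtain hempty | ⟨X, hX⟩ := (inside 𝒜 D).eq_empty_or_nonempty
    · have := card_pos (s := N ∩ D)
      grind
    · have := hB.card_inside_lt h hD hX
      have := card_pos (s := N ∩ D)
      grind
  have hN := h.sum_card_inter_add N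
  have hNA := h.isMinFragment.card_eq h.isBrick
  have hA := h.card_le_sum_card_inside_add
  have hcount := hB.card_le_add_sum_card_inside h
  have hfar := hB.card_disjoint_eq_zero_or_add_two_le h
  have hmeeting := hB.sum_card_inside_add_le h
  have hfst := hB.card_inside_fst_add_two_le_or h
  have hT := card_sdiff_add_card_inter T (verts 𝒜)
  have hone := hB.card_inter_le_one h
  have herase := add_sum_erase 𝒟 (fun D => #(N ∩ D) - #(inside 𝒜 D) - 1) hB.fst_mem
  rw [← hB.card_eq] at hcount
  rw [inter_comm] at hT
  rw [← card_eq_zero] at hfst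
  omega

theorem inside_eq_empty_of_ne (hB : IsEdgeBarrier G a b T 𝒟 E₁ E₂)
    (h : IsCrossing G a b N 𝒜 T 𝒟 E₁ E₂) (hD : D ∈ 𝒟.erase E₁) : inside 𝒜 D = ∅ := by
  by_contra hne
  have := h.sum_card_inside_add_three_le (singleton_subset_iff.2 (mem_of_mem_erase hD))
    (by rwa [singleton_biUnion, nonempty_iff_ne_empty]) (by simpa using (ne_of_mem_erase hD).symm)
  rw [sum_singleton, sum_singleton] at this
  have := hB.card_sdiff_add_sum_le_one h
  have := h.isMinFragment.card_inter_le_card_sdiff T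
  have := single_le_sum_of_canonicallyOrdered
    (f := fun D => #(N ∩ D) - #(inside 𝒜 D) - 1) hD
  omega

theorem subset_union_of_ne (hB : IsEdgeBarrier G a b T 𝒟 E₁ E₂)
    (h : IsCrossing G a b N 𝒜 T 𝒟 E₁ E₂) (hD : D ∈ 𝒟.erase E₁) : D ⊆ verts 𝒜 ∪ N := by
  by_contra hnot
  have := h.three_le_of_not_subset (mem_of_mem_erase hD) hnot
  have := hB.card_sdiff_add_sum_le_one h
  have := single_le_sum_of_canonicallyOrdered
    (f := fun D => #(N ∩ D) - #(inside 𝒜 D) - 1) hD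
  rw [hB.inside_eq_empty_of_ne h hD, card_empty] at this
  omega

/-- Otherwise `𝒟.erase E₁` would be a fragment covering fewer vertices than `𝒜`. -/
theorem not_isCrossing (hB : IsEdgeBarrier G a b T 𝒟 E₁ E₂) :
    ¬ IsCrossing G a b N 𝒜 T 𝒟 E₁ E₂ := fun h => by
  have hle := h.isMinFragment.card_verts_le _ _ hB.isFragment
  have hsum := hB.card_sdiff_add_sum_le_one h
  have hcard : #(verts (𝒟.erase E₁)) ≤ ∑ D ∈ 𝒟.erase E₁, #(verts 𝒜 ∩ D) +
      ∑ D ∈ 𝒟.erase E₁, (#(N ∩ D) - #(inside 𝒜 D) - 1) + #(𝒟.erase E₁) := by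
    rw [card_eq_sum_ones (𝒟.erase E₁), ← sum_add_distrib, ← sum_add_distrib]
    refine card_biUnion_le.trans (sum_le_sum fun D hD => ?_)
    have := h.isMinFragment.card_sdiff_add D
    rw [sdiff_eq_empty_iff_subset.2 (hB.subset_union_of_ne h hD), card_empty] at this
    rw [hB.inside_eq_empty_of_ne h hD, card_empty, id]
    omega
  have hA := h.sum_card_inter_add (verts 𝒜)
  have ha : 0 < #(verts 𝒜 ∩ E₁) := card_pos.2 ⟨a, mem_inter.2 ⟨h.fst_mem_verts, hB.mem_fst⟩⟩
  rw [← add_sum_erase 𝒟 _ hB.fst_mem] at hA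
  have hT := card_sdiff_add_card_inter T (verts 𝒜)
  have := card_erase_add_one hB.fst_mem
  have := hB.card_eq
  rw [inter_comm] at hT
  omega

end IsEdgeBarrier

end BarrierContradiction

section ConnectivityContradiction

variable {V : Type*} [Fintype V] [DecidableEq V] {G : SimpleGraph V} {a b : V}
  {N T P Q D E₁ E₂ : Finset V} {𝒜 𝒟 : Finset (Finset V)}

namespace IsCrossing

theorem card_inter_add_card_inter_le (h : IsCrossing G a b N 𝒜 T 𝒟 E₁ E₂) :
    #(verts 𝒜 ∩ T) + #(N ∩ T) ≤ #T := by
  have := h.isMinFragment.card_inter_le_card_sdiff T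
  have := card_sdiff_add_card_inter T (verts 𝒜)
  rw [inter_comm] at this
  omega

theorem card_le_or_three_le (h : IsCrossing G a b N 𝒜 T 𝒟 E₁ E₂) (hD : D ∈ 𝒟) :
    #D ≤ #(verts 𝒜 ∩ D) + #(N ∩ D) ∨ 3 ≤ #(N ∩ D) + #(T \ verts 𝒜) := by
  by_cases hDA : D ⊆ verts 𝒜 ∪ N
  · have := h.isMinFragment.card_sdiff_add D
    rw [sdiff_eq_empty_iff_subset.2 hDA, card_empty] at this
    omega
  · exact .inr (h.three_le_of_not_subset hD hDA)

theorem card_inter_le_and_lt (h : IsCrossing G a b N 𝒜 T {P, Q} P Q)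
    (hdeg : ∀ v, 4 ≤ (G.neighborSet v).ncard) (hT : #T ≤ 2) :
    #(verts 𝒜 ∩ T) ≤ #(N ∩ P) ∧ #(verts 𝒜 ∩ T) < #(N ∩ Q) := by
  have hsep := h.isEdgeSeparation
  have hP := h.isMinFragment.card_verts_le _ _ (hsep.isFragment h.isBrick hdeg hT)
  have hQ := h.isMinFragment.card_verts_le _ _ (hsep.symm.isFragment h.isBrick hdeg hT)
  rw [verts_singleton] at hP hQ
  have hA := h.sum_card_inter_add (verts 𝒜)
  rw [sum_pair hsep.fst_ne_snd] at hA
  have haP : 0 < #(verts 𝒜 ∩ P) := card_pos.2 ⟨a, mem_inter.2 ⟨h.fst_mem_verts, hsep.mem_fst⟩⟩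
  have hTA := card_sdiff_add_card_inter T (verts 𝒜)
  rw [inter_comm] at hTA
  have := h.card_le_or_three_le hsep.fst_mem
  have := h.card_le_or_three_le hsep.snd_mem
  omega

theorem inside_nonempty_or_inside_nonempty (h : IsCrossing G a b N 𝒜 T {P, Q} P Q)
    (hdeg : ∀ v, 4 ≤ (G.neighborSet v).ncard) (hT : #T ≤ 2) :
    (inside 𝒜 P).Nonempty ∨ (inside 𝒜 Q).Nonempty := by
  by_contra! hempty
  obtain ⟨X, hX, haX⟩ := mem_verts.1 h.fst_mem_verts
  have hXT : X ∈ meeting 𝒜 T := mem_meeting.2 ⟨hX, fun hdisj => by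
    obtain ⟨D, hD, hXD⟩ := h.exists_subset_of_disjoint hX hdisj
    have hXD := mem_inside.2 ⟨hX, hXD⟩
    rcases mem_insert.1 hD with rfl | hD
    · simp [hempty.1] at hXD
    · simp [mem_singleton.1 hD, hempty.2] at hXD⟩
  have hsep := h.isEdgeSeparation
  obtain ⟨z, hz, hzb⟩ := hsep.exists_ne_snd hdeg hT
  have hthree := h.three_le_card_inter_add hXT haX (z := z)
    (Finset.disjoint_right.1 hsep.disjoint_fst_snd hz) hzb
    fun hzT => absurd hzT (Finset.disjoint_left.1 (h.disjoint_of_mem hsep.snd_mem) hz)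
  have hrest := card_le_sum_card_inter (erase_subset X (meeting 𝒜 T))
  have hmeeting := h.sum_meeting_card_inter_le
  rw [← add_sum_erase _ _ hXT] at hmeeting
  have hcard := card_erase_add_one hXT
  have hA := h.card_le_sum_card_inside_add
  have hN := h.sum_card_inter_add N
  have hNA := h.isMinFragment.card_eq h.isBrick
  have hlt := h.card_inter_le_and_lt hdeg hT
  rw [sum_pair hsep.fst_ne_snd] at hA hN
  rw [hempty.1, hempty.2, card_empty] at hA
  omega

theorem two_lt_card (h : IsCrossing G a b N 𝒜 T {P, Q} P Q)
    (hdeg : ∀ v, 4 ≤ (G.neighborSet v).ncard) : 2 < #T := by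
  by_contra! hT
  have hsep := h.isEdgeSeparation
  have hA := h.card_le_sum_card_inside_add
  have hN := h.sum_card_inter_add N
  have hNA := h.isMinFragment.card_eq h.isBrick
  have hlt := h.card_inter_le_and_lt hdeg hT
  have hcard := h.card_inter_add_card_inter_le
  have hmeeting := (card_le_sum_card_inter subset_rfl).trans h.sum_meeting_card_inter_le
  have htwo := h.sum_card_inside_add_two_le (singleton_subset_iff.2 hsep.fst_mem)
  have hthree := h.sum_card_inside_add_three_le (singleton_subset_iff.2 hsep.snd_mem)
    (hE₁ := by simpa using hsep.fst_ne_snd)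
  rw [sum_pair hsep.fst_ne_snd] at hA hN
  simp only [singleton_biUnion, sum_singleton] at htwo hthree
  have hP := (inside 𝒜 P).eq_empty_or_nonempty.imp_left card_eq_zero.2
  have hQ := (inside 𝒜 Q).eq_empty_or_nonempty.imp_left card_eq_zero.2
  rcases h.inside_nonempty_or_inside_nonempty hdeg hT with hne | hne
  · have := htwo hne
    rcases hQ with hQ | hQ
    · omega
    · have := hthree hQ
      omega
  · have := hthree hne
    rcases hP with hP | hP
    · omega
    · have := htwo hP
      omega

end IsCrossing

end ConnectivityContradiction

section Contacts

variable {V : Type*} {G : SimpleGraph V} {N X : Finset V} {b : V}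

open Classical in
/-- The vertices of `N` with a neighbour in `X`. -/
noncomputable def contacts (G : SimpleGraph V) (N X : Finset V) : Finset V :=
  {b ∈ N | ∃ x ∈ X, G.Adj x b}

theorem mem_contacts : b ∈ contacts G N X ↔ b ∈ N ∧ ∃ x ∈ X, G.Adj x b := by
  simp [contacts]

theorem contacts_subset : contacts G N X ⊆ N := fun _ hb => (mem_contacts.1 hb).1

theorem IsShore.contacts (hX : IsShore G N X) : IsShore G (contacts G N X) X where
  disjoint := hX.disjoint.mono_right contacts_subset
  adj_mem x hx _ hxy := (hX.adj_mem hx hxy).imp_right fun hy => mem_contacts.2 ⟨hy, x, hx, hxy⟩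

theorem sum_card_contacts_le {ι : Type*} {s : Finset ι} {f : ι → Finset V}
    (hf : (s : Set ι).PairwiseDisjoint f)
    (hN : ∀ b ∈ N, ∀ i ∈ s, ∀ x ∈ f i, G.Adj x b → ∀ j ∈ s, ∀ y ∈ f j, G.Adj y b → x = y) :
    ∑ i ∈ s, #(contacts G N (f i)) ≤ #N := by
  classical
  rw [← card_biUnion]
  · exact card_le_card (biUnion_subset.2 fun _ _ => contacts_subset)
  · refine fun i hi j hj hij => Finset.disjoint_left.2 fun b hbi hbj => ?_
    obtain ⟨hb, x, hx, hxb⟩ := mem_contacts.1 hbi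
    obtain ⟨-, y, hy, hyb⟩ := mem_contacts.1 hbj
    obtain rfl := hN b hb i hi x hx hxb j hj y hy hyb
    exact Finset.disjoint_left.1 (hf hi hj hij) hx hy

end Contacts

section Conclusion

variable {V : Type*} [Fintype V] [DecidableEq V] {G : SimpleGraph V} {b x y : V}
  {N X : Finset V} {𝒜 : Finset (Finset V)}

namespace IsMinFragment

theorem eq_of_adj (h : IsMinFragment G N 𝒜) (hG : IsMinimalBrick G)
    (hdeg : ∀ v, 4 ≤ (G.neighborSet v).ncard) (hb : b ∈ N) (hx : x ∈ verts 𝒜) (hxb : G.Adj x b)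
    (hy : y ∈ verts 𝒜) (hyb : G.Adj y b) : x = y := by
  by_contra hxy
  have hadj : ∃ c ∈ verts 𝒜, c ≠ x ∧ G.Adj c b := ⟨y, hy, Ne.symm hxy, hyb⟩
  obtain ⟨T, P, Q, hT, hsep⟩ | ⟨T, 𝒟, E₁, E₂, hB⟩ :=
    hG.exists_isEdgeSeparation_or_exists_isEdgeBarrier hxb
  · exact (IsCrossing.two_lt_card ⟨hG.1, h, hsep, hx, hb, hadj⟩ hdeg).not_ge hT
  · exact hB.not_isCrossing ⟨hG.1, h, hB.toIsEdgeSeparation, hx, hb, hadj⟩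

theorem not_nontrivial (h : IsMinFragment G N 𝒜) (hG : IsBrick G)
    (hN : ∀ b ∈ N, ∀ x ∈ verts 𝒜, G.Adj x b → ∀ y ∈ verts 𝒜, G.Adj y b → x = y) :
    ¬ 𝒜.Nontrivial := fun h𝒜 => by
  have hcontacts : ∀ X ∈ 𝒜, 4 ≤ #(contacts G N X) := fun X hX => by
    obtain ⟨Y, hY, hYX⟩ := h𝒜.exists_ne X
    obtain ⟨z, hz⟩ := h.nonempty_of_mem Y hY
    have hzX : z ∉ X := fun hzX => hYX (h.eq_of_mem hY hX hz hzX)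
    exact h.four_le_card hG (h.isShore X hX).contacts (h.nonempty_of_mem X hX)
      ((ssubset_iff_of_subset (subset_verts hX)).2 ⟨z, subset_verts hY hz, hzX⟩) hzX
      fun hzN => Finset.disjoint_left.1 h.disjoint_verts (subset_verts hY hz)
        (contacts_subset hzN)
  have hlower := card_nsmul_le_sum 𝒜 _ 4 hcontacts
  have hupper := sum_card_contacts_le (f := id) h.pairwiseDisjoint
    fun b hb X hX x hx hxb Y hY y hy =>
      hN b hb x (subset_verts hX hx) hxb y (subset_verts hY hy)
  have := h.card_eq hG
  have := one_lt_card_iff_nontrivial.2 h𝒜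
  simp only [smul_eq_mul, id] at hlower hupper
  omega

/-- Otherwise the vertices of `X` with neighbours outside, of which there are at most three,
separate the other vertices of `X` from the rest. -/
theorem contacts_nonempty (h : IsMinFragment G N {X}) (hG : IsBrick G)
    (hsum : ∑ x ∈ X, #(contacts G N {x}) ≤ #N) : ∀ x ∈ X, (contacts G N {x}).Nonempty := by
  by_contra! hX
  obtain ⟨x, hx, hempty⟩ := hX
  let W := {x ∈ X | (contacts G N {x}).Nonempty}
  have hWX : W ⊆ X := filter_subset _ _
  have hW : #W ≤ 3 := by
    have hN := h.card_eq hG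
    rw [card_singleton] at hN
    refine le_trans ?_ (hsum.trans hN.le)
    rw [card_filter]
    refine sum_le_sum fun x _ => ?_
    split_ifs with hne
    · exact hne.card_pos
    · exact Nat.zero_le _
  have hshore : IsShore G W (X \ W) :=
    ⟨sdiff_disjoint, fun u hu v huv => by
      obtain ⟨huX, huW⟩ := mem_sdiff.1 hu
      rcases (h.isShore X (mem_singleton_self X)).adj_mem huX huv with hv | hv
      · exact (em (v ∈ W)).symm.imp_left fun hvW => mem_sdiff.2 ⟨hv, hvW⟩
      · exact absurd (mem_filter.2 ⟨huX, v, mem_contacts.2 ⟨hv, u, mem_singleton_self u, huv⟩⟩) huW⟩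
  have hxW : x ∈ X \ W := mem_sdiff.2 ⟨hx, fun hxW => (mem_filter.1 hxW).2.ne_empty hempty⟩
  obtain ⟨z, hz⟩ : N.Nonempty := card_pos.1 (by have := h.two_le_card; omega)
  have hzX : z ∉ X := Finset.disjoint_right.1 (h.isShore X (mem_singleton_self X)).disjoint hz
  have hthree := hG.1.three_le_card hshore ⟨x, hxW⟩ (fun hz => hzX (mem_sdiff.1 hz).1)
    fun hz => hzX (hWX hz)
  have hfour := h.four_le_card hG hshore ⟨x, hxW⟩
    (by rw [verts_singleton]; exact sdiff_ssubset hWX (card_pos.1 (by omega)))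
    (fun hz => hzX (mem_sdiff.1 hz).1) fun hz => hzX (hWX hz)
  omega

theorem ne_singleton (h : IsMinFragment G N 𝒜) (hG : IsBrick G)
    (hdeg : ∀ v, 4 ≤ (G.neighborSet v).ncard)
    (hN : ∀ b ∈ N, ∀ x ∈ verts 𝒜, G.Adj x b → ∀ y ∈ verts 𝒜, G.Adj y b → x = y) : 𝒜 ≠ {X} := by
  rintro rfl
  rw [verts_singleton] at hN
  have hcard := h.card_eq hG
  rw [card_singleton] at hcard
  have hsum : ∑ x ∈ X, #(contacts G N {x}) ≤ #N := sum_card_contacts_le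
    (fun x _ y _ hxy => by simpa using hxy)
    (by simpa using fun b hb x hx hxb y hy => hN b hb x hx hxb y hy)
  have hpos := fun x hx => card_pos.2 (h.contacts_nonempty hG hsum x hx)
  have hle := card_nsmul_le_sum X _ 1 hpos
  have hlower := card_nsmul_le_sum X (fun x => #(contacts G N {x})) (5 - #X) fun x hx => by
    have hnbr := four_le_card_of_neighborSet_subset hdeg (v := x)
      (N := X.erase x ∪ contacts G N {x}) fun y hxy => by
        rcases (h.isShore X (mem_singleton_self X)).adj_mem hx hxy with hy | hy
        · exact mem_union_left _ (mem_erase.2 ⟨hxy.ne', hy⟩)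
        · exact mem_union_right _ (mem_contacts.2 ⟨hy, x, mem_singleton_self x, hxy⟩)
    have := card_union_le (X.erase x) (contacts G N {x})
    have := card_erase_add_one hx
    omega
  have hX := (h.nonempty_of_mem X (mem_singleton_self X)).card_pos
  rw [smul_eq_mul] at hle hlower
  have : #X ≤ 3 := by omega
  interval_cases #X <;> omega

end IsMinFragment

end Conclusion

theorem minimalBrick_has_cubic_vertex {V : Type*} [Fintype V]
    (G : SimpleGraph V) (hG : IsMinimalBrick G) :
    ∃ v : V, (G.neighborSet v).ncard = 3 := by
  classical
  by_contra! hcubic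
  have hdeg : ∀ v, 4 ≤ (G.neighborSet v).ncard := fun v =>
    (hG.1.1.three_le_ncard_neighborSet v).lt_of_ne' (hcubic v)
  obtain ⟨a⟩ : Nonempty V := Fintype.card_pos_iff.1 (by have := hG.1.1.1; omega)
  obtain ⟨b, hab⟩ : (G.neighborSet a).Nonempty :=
    Set.nonempty_of_ncard_ne_zero (by have := hdeg a; omega)
  obtain ⟨N, 𝒜, h⟩ := hG.exists_isMinFragment hdeg hab
  have hN : ∀ b ∈ N, ∀ x ∈ verts 𝒜, G.Adj x b → ∀ y ∈ verts 𝒜, G.Adj y b → x = y :=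
    fun b hb x hx hxb y => h.eq_of_adj hG hdeg hb hx hxb
  rcases h.nonempty.exists_eq_singleton_or_nontrivial with ⟨X, hX⟩ | h𝒜
  · exact h.ne_singleton hG.1 hdeg hN hX
  · exact h.not_nontrivial hG.1 hN h𝒜
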